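/- Let n ≥ 2 and let d_1,...,d_k be positive integers with k ≤ m if m < n and k < n otherwise. The natural density of n×m integer matrices A whose HNF has diagonal beginning with (d_1, d_2, ..., d_k) equals (ζ(n)·ζ(n−1)·...·ζ(n−k+1) · d_1^n · d_2^{n−1} · ... · d_k^{n−k+1})^{-1}. -/

import Mathlib

open Filter

/-- Real value of the Riemann zeta function at a natural number argument. -/
noncomputable def zetaR (k : ℕ) : ℝ := ∑' n : ℕ, (1 : ℝ) / (n + 1 : ℝ) ^ k

open scoped Classical in
/-- Number of matrices of `S` in the cube of side `2B` centered at `z`. -/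
noncomputable def matCubeCount {n m : ℕ} (S : Set (Matrix (Fin n) (Fin m) ℤ))
    (z : Matrix (Fin n) (Fin m) ℤ) (B : ℕ) : ℕ :=
  (Finset.filter (fun A : Fin n → Fin m → ℤ => Matrix.of A ∈ S)
    (Fintype.piFinset fun i =>
      Fintype.piFinset fun l => Finset.Ico (z i l - (B : ℤ)) (z i l + (B : ℤ)))).card

/-- Natural density of a set of `n × m` integer matrices, via counting in cubes
of side `2B` and arbitrary center, normalized by `(2B)^(nm)`. -/
def HasMatDensity {n m : ℕ} (S : Set (Matrix (Fin n) (Fin m) ℤ)) (δ : ℝ) : Prop :=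
  ∀ z : Matrix (Fin n) (Fin m) ℤ,
    Tendsto (fun B : ℕ => (matCubeCount S z B : ℝ) / (2 * (B : ℝ)) ^ (n * m))
      atTop (nhds δ)

/-- `H` is in Hermite normal form with `r` nonzero rows and pivot columns `j`. -/
def IsHNFWith {n m : ℕ} (H : Matrix (Fin n) (Fin m) ℤ) (r : ℕ) (hr : r ≤ n)
    (j : Fin r → Fin m) : Prop :=
  StrictMono j ∧
  (∀ i : Fin n, r ≤ (i : ℕ) → ∀ l, H i l = 0) ∧
  (∀ i : Fin r, 0 < H (Fin.castLE hr i) (j i)) ∧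
  (∀ i : Fin r, ∀ l : Fin m, (l : ℕ) < (j i : ℕ) → H (Fin.castLE hr i) l = 0) ∧
  (∀ i : Fin r, ∀ k : Fin n, (k : ℕ) < (i : ℕ) →
    0 ≤ H k (j i) ∧ H k (j i) < H (Fin.castLE hr i) (j i))

/-- `H` is in Hermite normal form. -/
def IsHNF {n m : ℕ} (H : Matrix (Fin n) (Fin m) ℤ) : Prop :=
  ∃ (r : ℕ) (hr : r ≤ n) (j : Fin r → Fin m), IsHNFWith H r hr j

/-- A square integer matrix is unimodular if its determinant is `±1`. -/
def IsUnimodular {n : ℕ} (U : Matrix (Fin n) (Fin n) ℤ) : Prop :=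
  U.det = 1 ∨ U.det = -1

/-- `H` is the Hermite normal form of `A`: `H` is in HNF and `A = U * H`
for some unimodular `U`. -/
def IsHNFOf {n m : ℕ} (H A : Matrix (Fin n) (Fin m) ℤ) : Prop :=
  IsHNF H ∧ ∃ U : Matrix (Fin n) (Fin n) ℤ, IsUnimodular U ∧ A = U * H

/-!
The first `k` diagonal entries of the Hermite normal form of `A` are the positive numbers `d` if and
only if the first `k` columns of `A` form a product `P * H`, where `P` is primitive (its columns are
independent modulo every prime) and `H` is a `k × k` Hermite normal form with diagonal `d`. The
matrix `H` is then unique, and there are `∏ b, d b ^ b` possibilities for it (`b` counted from `0`).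

Primitivity at finitely many primes is a condition modulo their product, whose density is read off
from the number of `n × k` matrices of rank `k` over each `𝔽_p`. As `k < n`, the loss of rank modulo
a prime forces that prime to divide two bordered minors that are affine in different entries of
`A`; this makes the contribution of all primes beyond `T` arbitrarily small as `T → ∞`, so the
density of primitive matrices is the Euler product `∏ i, ζ(n - i)⁻¹`. Right multiplication by `H`
has image of index `(det H) ^ n`, so it divides the density by `(∏ i, d i) ^ n`, and it remains to
sum over `H`.
-/

/-! ### Density in cubes of integer points -/

section CubeDensity

open Finset Topology

variable {ι κ α : Type*} [Fintype ι] [Fintype κ]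

lemma pow_card_eq_mul {e : ι → κ} (he : e.Injective) (x : ℝ) :
    x ^ Fintype.card κ = x ^ Fintype.card ι * x ^ (Fintype.card κ - Fintype.card ι) := by
  rw [← pow_add, Nat.add_sub_cancel' (Fintype.card_le_of_injective e he)]

variable [DecidableEq ι]

/-- The integer interval of length `2B` centred at `x`. -/
noncomputable def window (x : ℤ) (B : ℕ) : Finset ℤ := Ico (x - B) (x + B)

/-- The integer points of the half-open cube of side `2B` centred at `z`. -/
noncomputable def cube (z : ι → ℤ) (B : ℕ) : Finset (ι → ℤ) :=
  Fintype.piFinset fun i => window (z i) B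

open scoped Classical in
/-- The number of points of `S` in `cube z B`. -/
noncomputable def cubeCount (S : Set (ι → ℤ)) (z : ι → ℤ) (B : ℕ) : ℕ :=
  #{f ∈ cube z B | f ∈ S}

/-- `S` has natural density `δ`, measured in cubes with any fixed centre. -/
def HasCubeDensity (S : Set (ι → ℤ)) (δ : ℝ) : Prop :=
  ∀ z : ι → ℤ, Tendsto (fun B : ℕ => (cubeCount S z B : ℝ) / (2 * (B : ℝ)) ^ Fintype.card ι)
    atTop (𝓝 δ)

/-- `S` eventually occupies at most a proportion `ε` of the cubes with any fixed centre. -/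
def UpperDensityLE (S : Set (ι → ℤ)) (ε : ℝ) : Prop :=
  ∀ z : ι → ℤ, ∀ᶠ B : ℕ in atTop, (cubeCount S z B : ℝ) ≤ ε * (2 * (B : ℝ)) ^ Fintype.card ι

lemma mem_window {x y : ℤ} {B : ℕ} : y ∈ window x B ↔ x - B ≤ y ∧ y < x + B := mem_Ico

lemma card_window (x : ℤ) (B : ℕ) : #(window x B) = 2 * B := by
  rw [window, Int.card_Ico]
  omega

lemma mem_cube {z f : ι → ℤ} {B : ℕ} : f ∈ cube z B ↔ ∀ i, f i ∈ window (z i) B :=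
  Fintype.mem_piFinset

lemma card_cube (z : ι → ℤ) (B : ℕ) : #(cube z B) = (2 * B) ^ Fintype.card ι := by
  simp only [cube, Fintype.card_piFinset, card_window, prod_const, card_univ]

lemma cubeCount_univ (z : ι → ℤ) (B : ℕ) : cubeCount Set.univ z B = (2 * B) ^ Fintype.card ι := by
  simp only [cubeCount, Set.mem_univ, filter_true, card_cube]

lemma cubeCount_mono {S T : Set (ι → ℤ)} (h : S ⊆ T) (z : ι → ℤ) (B : ℕ) :
    cubeCount S z B ≤ cubeCount T z B := by
  classical
  exact card_le_card (monotone_filter_right _ fun _ _ hf => h hf)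

lemma cubeCount_union_le (S T : Set (ι → ℤ)) (z : ι → ℤ) (B : ℕ) :
    cubeCount (S ∪ T) z B ≤ cubeCount S z B + cubeCount T z B := by
  classical
  simp only [cubeCount, Set.mem_union, filter_or]
  exact card_union_le _ _

lemma cubeCount_biUnion (s : Finset α) {S : α → Set (ι → ℤ)}
    (hS : (s : Set α).PairwiseDisjoint S) (z : ι → ℤ) (B : ℕ) :
    cubeCount (⋃ a ∈ s, S a) z B = ∑ a ∈ s, cubeCount (S a) z B := by
  classical
  simp only [cubeCount]
  rw [← card_biUnion fun a ha b hb hab => ?_]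
  · congr 1
    ext f
    simp only [mem_filter, mem_biUnion, Set.mem_iUnion, exists_prop]
    tauto
  · exact disjoint_filter.mpr fun f _ hfa hfb => Set.disjoint_left.mp (hS ha hb hab) hfa hfb

lemma cubeCount_translate (S : Set (ι → ℤ)) (v z : ι → ℤ) (B : ℕ) :
    cubeCount {f | f - v ∈ S} z B = cubeCount S (z - v) B := by
  classical
  refine card_nbij' (· - v) (· + v) ?_ ?_ (fun f _ => sub_add_cancel f v)
    (fun f _ => add_sub_cancel_right f v)
  · simp only [Set.MapsTo, coe_filter, mem_cube, mem_window, Set.mem_ofPred_eq, Pi.sub_apply]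
    exact fun f hf => ⟨fun i => by have := hf.1 i; omega, hf.2⟩
  · simp only [Set.MapsTo, coe_filter, mem_cube, mem_window, Set.mem_ofPred_eq, Pi.sub_apply,
      Pi.add_apply, add_sub_cancel_right]
    exact fun f hf => ⟨fun i => by have := hf.1 i; omega, hf.2⟩

lemma card_cube_fiber [DecidableEq κ] {e : ι → κ} (he : e.Injective) {z : κ → ℤ} {B : ℕ} {g : ι → ℤ}
    (hg : g ∈ cube (z ∘ e) B) :
    #{f ∈ cube z B | f ∘ e = g} = (2 * B) ^ (Fintype.card κ - Fintype.card ι) := by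
  have fiber_eq : {f ∈ cube z B | f ∘ e = g} = Fintype.piFinset
      (Function.extend e (fun i => {g i}) fun x => window (z x) B) := by
    ext f
    simp only [mem_filter, mem_cube, Fintype.mem_piFinset]
    constructor
    · rintro ⟨hf, rfl⟩ x
      by_cases hx : ∃ i, e i = x
      · obtain ⟨i, rfl⟩ := hx
        simp [he.extend_apply]
      · simpa only [Function.extend_apply' _ _ _ hx] using hf x
    · intro hf
      have hfg : ∀ i, f (e i) = g i := fun i => by simpa [he.extend_apply] using hf (e i)
      refine ⟨fun x => ?_, funext hfg⟩
      by_cases hx : ∃ i, e i = x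
      · obtain ⟨i, rfl⟩ := hx
        exact hfg i ▸ mem_cube.mp hg i
      · simpa only [Function.extend_apply' _ _ _ hx] using hf x
  have card_off_range : ∀ x ∈ (univ.map ⟨e, he⟩)ᶜ,
      #(Function.extend e (fun i => {g i}) (fun x => window (z x) B) x) = 2 * B := fun x hx => by
    rw [Function.extend_apply' _ _ _ (by simpa using hx), card_window]
  rw [fiber_eq, Fintype.card_piFinset, ← prod_mul_prod_compl (univ.map ⟨e, he⟩),
    prod_congr rfl card_off_range]
  simp [he.extend_apply, card_compl]

lemma comp_mem_cube [DecidableEq κ] {z f : κ → ℤ} {B : ℕ} (hf : f ∈ cube z B) (e : ι → κ) :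
    f ∘ e ∈ cube (z ∘ e) B :=
  mem_cube.mpr fun i => mem_cube.mp hf (e i)

lemma cubeCount_comap [DecidableEq κ] {e : ι → κ} (he : e.Injective) (S : Set (ι → ℤ))
    (z : κ → ℤ) (B : ℕ) :
    cubeCount {f | f ∘ e ∈ S} z B =
      cubeCount S (z ∘ e) B * (2 * B) ^ (Fintype.card κ - Fintype.card ι) := by
  classical
  refine (card_eq_sum_card_fiberwise (f := (· ∘ e)) (t := {g ∈ cube (z ∘ e) B | g ∈ S})
    fun f hf => ?_).trans (sum_const_nat fun g hg => ?_)
  · rw [mem_coe, mem_filter] at hf ⊢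
    exact ⟨comp_mem_cube hf.1 e, hf.2⟩
  · rw [mem_filter] at hg
    rw [← card_cube_fiber he hg.1, filter_filter]
    refine congrArg card (filter_congr fun f _ => and_iff_right_of_imp ?_)
    rintro rfl
    exact hg.2

lemma cubeCount_le_card_of_injOn {S : Set (ι → ℤ)} {z : ι → ℤ} {B : ℕ} {t : Finset α}
    (F : (ι → ℤ) → α) (hF : ∀ f ∈ cube z B, f ∈ S → F f ∈ t)
    (hinj : Set.InjOn F {f ∈ S | f ∈ cube z B}) : cubeCount S z B ≤ #t := by
  classical
  refine card_le_card_of_injOn F (fun f hf => ?_) (hinj.mono fun f hf => ?_)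
  · exact hF f (mem_filter.mp hf).1 (mem_filter.mp hf).2
  · exact (mem_filter.mp hf).symm

lemma cubeCount_le_of_fiber_le {S : Set (ι → ℤ)} {e : κ → ι} {z : ι → ℤ} {B : ℕ} {c : ℝ}
    (hc : 0 ≤ c)
    (h : ∀ g ∈ cube z B, g ∈ S → (cubeCount {f ∈ S | f ∘ e = g ∘ e} z B : ℝ) ≤ c) :
    (cubeCount S z B : ℝ) ≤ c * (2 * (B : ℝ)) ^ Fintype.card κ := by
  classical
  have hfiber : ∀ g ∈ cube (z ∘ e) B, (#{f ∈ cube z B | f ∈ S ∧ f ∘ e = g} : ℝ) ≤ c := by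
    intro g _
    obtain hempty | ⟨f₀, hf₀⟩ := {f ∈ cube z B | f ∈ S ∧ f ∘ e = g}.eq_empty_or_nonempty
    · rwa [hempty, card_empty, Nat.cast_zero]
    · obtain ⟨hf₀z, hf₀S, rfl⟩ := mem_filter.mp hf₀
      exact (congrArg Nat.cast (by simp only [cubeCount, Set.mem_ofPred_eq])).trans_le
        (h f₀ hf₀z hf₀S)
  calc (cubeCount S z B : ℝ)
      = ∑ g ∈ cube (z ∘ e) B, (#{f ∈ cube z B | f ∈ S ∧ f ∘ e = g} : ℝ) := by
        simp only [cubeCount, ← Nat.cast_sum, ← filter_filter]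
        exact congrArg _ (card_eq_sum_card_fiberwise (f := (· ∘ e)) fun f hf =>
          comp_mem_cube (mem_filter.mp hf).1 e)
    _ ≤ #(cube (z ∘ e) B) • c := sum_le_card_nsmul _ _ _ hfiber
    _ = c * (2 * (B : ℝ)) ^ Fintype.card κ := by
        rw [card_cube, nsmul_eq_mul, mul_comm]
        push_cast
        rfl

namespace UpperDensityLE

variable {S T : Set (ι → ℤ)} {δ ε : ℝ}

lemma mono (hT : UpperDensityLE T δ) (hST : S ⊆ T) (hδε : δ ≤ ε) : UpperDensityLE S ε := fun z =>
  (hT z).mono fun B hB => calc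
    (cubeCount S z B : ℝ) ≤ cubeCount T z B := mod_cast cubeCount_mono hST z B
    _ ≤ δ * (2 * (B : ℝ)) ^ Fintype.card ι := hB
    _ ≤ ε * (2 * (B : ℝ)) ^ Fintype.card ι := by gcongr

lemma union (hS : UpperDensityLE S δ) (hT : UpperDensityLE T ε) :
    UpperDensityLE (S ∪ T) (δ + ε) := by
  intro z
  filter_upwards [hS z, hT z] with B hSB hTB
  rw [add_mul]
  exact le_trans (mod_cast cubeCount_union_le S T z B) (add_le_add hSB hTB)

lemma biUnion (s : Finset α) {S : α → Set (ι → ℤ)} (hS : ∀ a ∈ s, UpperDensityLE (S a) ε) :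
    UpperDensityLE (⋃ a ∈ s, S a) (#s * ε) := by
  classical
  induction s using Finset.induction_on with
  | empty => exact fun z => .of_forall fun B => by simp [cubeCount]
  | insert a s ha ih =>
    rw [set_biUnion_insert, card_insert_of_notMem ha, Nat.cast_add_one, add_one_mul, add_comm]
    exact (hS a (mem_insert_self a s)).union (ih fun b hb => hS b (mem_insert_of_mem hb))

lemma comap [DecidableEq κ] (hS : UpperDensityLE S ε) {e : ι → κ} (he : e.Injective) :
    UpperDensityLE {f : κ → ℤ | f ∘ e ∈ S} ε := by
  intro z
  filter_upwards [hS (z ∘ e)] with B hB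
  rw [cubeCount_comap he, pow_card_eq_mul he, ← mul_assoc]
  push_cast
  gcongr

end UpperDensityLE

namespace HasCubeDensity

variable {S : Set (ι → ℤ)} {δ : ℝ}

lemma univ : HasCubeDensity (Set.univ : Set (ι → ℤ)) 1 := by
  intro z
  refine tendsto_const_nhds.congr' ?_
  filter_upwards [eventually_gt_atTop 0] with B hB
  rw [cubeCount_univ]
  push_cast
  exact (div_self (by positivity)).symm

lemma biUnion (s : Finset α) {S : α → Set (ι → ℤ)} {δ : α → ℝ}
    (hdisj : (s : Set α).PairwiseDisjoint S) (h : ∀ a ∈ s, HasCubeDensity (S a) (δ a)) :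
    HasCubeDensity (⋃ a ∈ s, S a) (∑ a ∈ s, δ a) := by
  intro z
  refine (tendsto_finsetSum s fun a ha => h a ha z).congr fun B => ?_
  rw [cubeCount_biUnion s hdisj, Nat.cast_sum, sum_div]

lemma translate (h : HasCubeDensity S δ) (v : ι → ℤ) : HasCubeDensity {f | f - v ∈ S} δ := by
  intro z
  simpa only [cubeCount_translate] using h (z - v)

lemma comap [DecidableEq κ] (h : HasCubeDensity S δ) {e : ι → κ} (he : e.Injective) :
    HasCubeDensity {f : κ → ℤ | f ∘ e ∈ S} δ := by
  intro z
  refine (h (z ∘ e)).congr' ?_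
  filter_upwards [eventually_gt_atTop 0] with B hB
  rw [cubeCount_comap he, pow_card_eq_mul he]
  push_cast
  exact (mul_div_mul_right _ _ (by positivity)).symm

lemma of_approx {U V : ℕ → Set (ι → ℤ)} {u : ℕ → ℝ} (hU : ∀ T, HasCubeDensity (U T) (u T))
    (hu : Tendsto u atTop (𝓝 δ)) (hSU : ∀ T, S ⊆ U T) (hUS : ∀ T, U T ⊆ S ∪ V T)
    (hV : ∀ ε > 0, ∀ᶠ T in atTop, UpperDensityLE (V T) ε) : HasCubeDensity S δ := by
  intro z
  rw [Metric.tendsto_nhds]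
  intro ε hε
  obtain ⟨T, huT, hVT⟩ :=
    ((Metric.tendsto_nhds.mp hu (ε / 3) (by positivity)).and (hV (ε / 3) (by positivity))).exists
  filter_upwards [Metric.tendsto_nhds.mp (hU T z) (ε / 3) (by positivity), hVT z,
    eventually_gt_atTop 0] with B hUB hVB hB
  set N := (2 * (B : ℝ)) ^ Fintype.card ι
  have hN : 0 < N := by positivity
  have lower : (cubeCount S z B : ℝ) / N ≤ cubeCount (U T) z B / N := by
    gcongr
    exact cubeCount_mono (hSU T) z B
  have upper : (cubeCount (U T) z B : ℝ) / N ≤ cubeCount S z B / N + ε / 3 := by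
    have : (cubeCount (U T) z B : ℝ) ≤ cubeCount S z B + cubeCount (V T) z B :=
      mod_cast (cubeCount_mono (hUS T) z B).trans (cubeCount_union_le _ _ _ _)
    rw [div_add' _ _ _ hN.ne']
    gcongr
    linarith
  rw [Real.dist_eq, abs_lt] at *
  constructor <;> linarith

end HasCubeDensity
end CubeDensity

section Homomorphisms

open Finset Topology

lemma map_eq_of_modEq_card {ι G : Type*} [AddCommGroup G] (π : (ι → ℤ) →+ G)
    {f g : ι → ℤ}
    (h : ∀ i, f i ≡ g i [ZMOD Nat.card G]) : π f = π g := by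
  choose w hw using fun i => (h i).dvd
  have : g = f + Nat.card G • w := by
    ext i
    rw [Pi.add_apply, Pi.smul_apply, nsmul_eq_mul, ← hw i, add_sub_cancel]
  rw [this, map_add, map_nsmul, card_nsmul_eq_zero', add_zero]

variable {ι : Type*} [Fintype ι] [DecidableEq ι]

lemma abs_card_window_modEq_sub_le {M : ℕ} (hM : 0 < M) (v x : ℤ) (B : ℕ) :
    |(#{y ∈ window x B | y ≡ v [ZMOD M]} : ℝ) - 2 * B / M| ≤ 1 := by
  set hi : ℚ := (((x + B : ℤ) : ℚ) - v) / (M : ℤ) with hhi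
  set lo : ℚ := (((x - B : ℤ) : ℚ) - v) / (M : ℤ) with hlo
  have hi_sub_lo : hi - lo = 2 * B / M := by
    rw [hhi, hlo]
    push_cast
    ring
  have hle : lo ≤ hi := by
    rw [← sub_nonneg, hi_sub_lo]
    positivity
  have hcard : (#{y ∈ window x B | y ≡ v [ZMOD M]} : ℤ) = ⌈hi⌉ - ⌈lo⌉ := by
    rw [window, Int.Ico_filter_modEq_card _ _ (mod_cast hM), max_eq_left]
    exact sub_nonneg.mpr (Int.ceil_mono hle)
  have hbound : |(#{y ∈ window x B | y ≡ v [ZMOD M]} : ℚ) - 2 * B / M| ≤ 1 := by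
    rw [← hi_sub_lo, abs_le, ← Int.cast_natCast, hcard, Int.cast_sub]
    constructor <;>
      linarith [Int.le_ceil hi, Int.ceil_lt_add_one hi, Int.le_ceil lo, Int.ceil_lt_add_one lo]
  have hreal := Rat.cast_le (K := ℝ) |>.mpr hbound
  push_cast at hreal
  exact hreal

lemma tendsto_card_window_modEq_div {M : ℕ} (hM : 0 < M) (v x : ℤ) :
    Tendsto (fun B : ℕ => (#{y ∈ window x B | y ≡ v [ZMOD M]} : ℝ) / (2 * (B : ℝ)))
      atTop (𝓝 (1 / M)) := by
  rw [tendsto_iff_dist_tendsto_zero]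
  have hzero : Tendsto (fun B : ℕ => 1 / (2 * (B : ℝ))) atTop (𝓝 0) :=
    tendsto_const_nhds.div_atTop (tendsto_natCast_atTop_atTop.const_mul_atTop two_pos)
  refine squeeze_zero' (.of_forall fun _ => dist_nonneg) ?_ hzero
  filter_upwards [eventually_gt_atTop 0] with B hB
  have hsub : (#{y ∈ window x B | y ≡ v [ZMOD M]} : ℝ) / (2 * B) - 1 / M =
      (#{y ∈ window x B | y ≡ v [ZMOD M]} - 2 * B / M) / (2 * B) := by
    field_simp
  rw [Real.dist_eq, hsub, abs_div, abs_of_pos (show (0 : ℝ) < 2 * B by positivity)]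
  gcongr
  exact abs_card_window_modEq_sub_le hM v x B

lemma hasCubeDensity_modEq {M : ℕ} (hM : 0 < M) (v : ι → ℤ) :
    HasCubeDensity {f | ∀ i, f i ≡ v i [ZMOD M]} ((1 / M) ^ Fintype.card ι) := by
  classical
  intro z
  have hprod := tendsto_finsetProd (univ : Finset ι)
    fun i _ => tendsto_card_window_modEq_div hM (v i) (z i)
  rw [prod_const, card_univ] at hprod
  refine hprod.congr fun B => ?_
  rw [prod_div_distrib, prod_const, card_univ, ← Nat.cast_prod, ← Fintype.card_piFinset, cubeCount]
  congr 3
  ext f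
  simp only [mem_cube, Fintype.mem_piFinset, mem_filter, Set.mem_ofPred_eq, forall_and]

lemma exists_hasCubeDensity_of_periodic {M : ℕ} (hM : 0 < M) {S : Set (ι → ℤ)}
    (hS : ∀ f g : ι → ℤ, (∀ i, f i ≡ g i [ZMOD M]) → f ∈ S → g ∈ S) :
    ∃ δ, HasCubeDensity S δ := by
  classical
  have : NeZero M := ⟨hM.ne'⟩
  have modEq_iff (f : ι → ℤ) (r : ι → ZMod M) :
      (∀ i, f i ≡ (r i).val [ZMOD M]) ↔ (fun i => (f i : ZMod M)) = r := by
    simp only [← ZMod.intCast_eq_intCast_iff, Int.cast_natCast, ZMod.natCast_zmod_val, funext_iff]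
  have hunion : S = ⋃ r ∈ ({r | (fun i => ((r i).val : ℤ)) ∈ S} : Finset (ι → ZMod M)),
      {f : ι → ℤ | ∀ i, f i ≡ (r i).val [ZMOD M]} := by
    ext f
    simp only [Set.mem_iUnion, mem_filter_univ, exists_prop, Set.mem_ofPred_eq]
    constructor
    · intro hf
      have hmod := (modEq_iff f _).mpr rfl
      exact ⟨_, hS f _ hmod hf, hmod⟩
    · rintro ⟨r, hr, hmod⟩
      exact hS _ f (fun i => (hmod i).symm) hr
  rw [hunion]
  refine ⟨_, .biUnion _ (fun r _ s _ hrs => ?_) fun r _ => hasCubeDensity_modEq hM _⟩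
  exact Set.disjoint_left.mpr fun f hr hs =>
    hrs (((modEq_iff f r).mp hr).symm.trans ((modEq_iff f s).mp hs))

variable {G : Type*} [AddCommGroup G] [Finite G]

lemma hasCubeDensity_preimage {π : (ι → ℤ) →+ G} (hπ : Function.Surjective π) (R : Set G) :
    HasCubeDensity (π ⁻¹' R) (Nat.card R / Nat.card G) := by
  classical
  have := Fintype.ofFinite G
  obtain ⟨δ, hδ⟩ := exists_hasCubeDensity_of_periodic (S := π ⁻¹' {0}) Nat.card_pos
    fun f g hfg hf => (map_eq_of_modEq_card π hfg).symm.trans hf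
  have fiber (x : G) : HasCubeDensity (π ⁻¹' {x}) δ := by
    obtain ⟨v, rfl⟩ := hπ x
    convert hδ.translate v using 1
    ext f
    simp [sub_eq_zero]
  have union (s : Finset G) : HasCubeDensity (π ⁻¹' s) (#s * δ) := by
    have h := HasCubeDensity.biUnion s (fun x _ y _ hxy => Disjoint.preimage π
      (Set.disjoint_singleton.mpr hxy)) fun x _ => fiber x
    rwa [sum_const, nsmul_eq_mul, ← Set.preimage_iUnion₂,
      show ⋃ x ∈ s, {x} = (s : Set G) from Set.biUnion_of_singleton _] at h
  have hone : (Nat.card G : ℝ) * δ = 1 := by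
    have h := union univ
    rw [coe_univ, Set.preimage_univ, card_univ, ← Nat.card_eq_fintype_card] at h
    exact tendsto_nhds_unique (h 0) (HasCubeDensity.univ 0)
  have hδ_eq : δ = 1 / Nat.card G := eq_one_div_of_mul_eq_one_right hone
  have hR := union R.toFinset
  rwa [Set.coe_toFinset, Set.toFinset_card, ← Nat.card_eq_fintype_card, hδ_eq, mul_one_div] at hR

/- `φ '' (π ⁻¹' R)` is the preimage of a set of `Nat.card R` elements in the finite quotient of
`ι → ℤ` by `φ (ker π)`. -/
lemma hasCubeDensity_image_preimage {π : (ι → ℤ) →+ G} (hπ : Function.Surjective π)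
    {φ : (ι → ℤ) →+ (ι → ℤ)} (hφ : Function.Injective φ) (hφ_index : φ.range.index ≠ 0)
    (R : Set G) :
    HasCubeDensity (φ '' (π ⁻¹' R)) (Nat.card R / (Nat.card G * φ.range.index)) := by
  let K := π.ker.map φ
  have hK : K.index = Nat.card G * φ.range.index := by
    rw [AddSubgroup.index_map_of_injective _ hφ, AddSubgroup.index_ker,
      AddMonoidHom.range_eq_top.mpr hπ, Nat.card_congr AddSubgroup.topEquiv.toEquiv]
  have : K.FiniteIndex := ⟨hK ▸ mul_ne_zero Nat.card_pos.ne' hφ_index⟩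
  let lift : G → (ι → ℤ) ⧸ K := fun x => φ (Function.surjInv hπ x)
  have lift_eq_iff (x : G) (f : ι → ℤ) :
      lift x = QuotientAddGroup.mk f ↔ ∃ g, π g = x ∧ φ g = f := by
    rw [QuotientAddGroup.eq, AddSubgroup.mem_map]
    constructor
    · rintro ⟨g, hg, hgf⟩
      refine ⟨Function.surjInv hπ x + g, ?_, ?_⟩
      · rw [map_add, Function.surjInv_eq hπ, AddMonoidHom.mem_ker.mp hg, add_zero]
      · rw [map_add, hgf, add_neg_cancel_left]
    · rintro ⟨g, rfl, rfl⟩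
      refine ⟨g - Function.surjInv hπ (π g), ?_, ?_⟩
      · rw [AddMonoidHom.mem_ker, map_sub, Function.surjInv_eq hπ, sub_self]
      · rw [map_sub, sub_eq_neg_add]
  have lift_injective : Function.Injective lift := fun x y hxy => by
    obtain ⟨g, rfl, hg⟩ := (lift_eq_iff x _).mp hxy
    rw [hφ hg, Function.surjInv_eq hπ]
  have himage : φ '' (π ⁻¹' R) = QuotientAddGroup.mk' K ⁻¹' (lift '' R) := by
    ext f
    simp only [Set.mem_image, Set.mem_preimage, QuotientAddGroup.mk'_apply, lift_eq_iff]
    exact ⟨fun ⟨g, hg, hgf⟩ => ⟨_, hg, g, rfl, hgf⟩, fun ⟨_, hx, g, hg, hgf⟩ => ⟨g, hg ▸ hx, hgf⟩⟩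
  have h := hasCubeDensity_preimage (QuotientAddGroup.mk'_surjective K) (lift '' R)
  rw [Nat.card_image_of_injective lift_injective, ← AddSubgroup.index, hK] at h
  rw [himage]
  exact_mod_cast h

end Homomorphisms

section Sieve

open Finset

/-- A prime exceeding `T` and not dividing `m` divides both `u` and `v`. -/
def HasCommonPrime (T : ℕ) (m u v : ℤ) : Prop :=
  ∃ p : ℕ, p.Prime ∧ T < p ∧ ¬(p : ℤ) ∣ m ∧ (p : ℤ) ∣ u ∧ (p : ℤ) ∣ v

lemma card_window_dvd_le {p : ℕ} (hp : p.Prime) {m : ℤ} (hm : ¬(p : ℤ) ∣ m) (t y : ℤ) (B : ℕ) :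
    (#{x ∈ window y B | (p : ℤ) ∣ m * x + t} : ℝ) ≤ 2 * B / p + 1 := by
  obtain hempty | ⟨x₀, hx₀⟩ := {x ∈ window y B | (p : ℤ) ∣ m * x + t}.eq_empty_or_nonempty
  · rw [hempty, card_empty, Nat.cast_zero]
    positivity
  · have hsub : {x ∈ window y B | (p : ℤ) ∣ m * x + t} ⊆ {x ∈ window y B | x ≡ x₀ [ZMOD p]} := by
      refine monotone_filter_right _ fun x _ hx => Int.modEq_iff_dvd.mpr ?_
      have hdvd : (p : ℤ) ∣ m * (x₀ - x) := by
        simpa only [mul_sub, add_sub_add_right_eq_sub] using dvd_sub (mem_filter.mp hx₀).2 hx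
      exact ((Nat.prime_iff_prime_int.mp hp).dvd_or_dvd hdvd).resolve_left hm
    have hcard : (#{x ∈ window y B | (p : ℤ) ∣ m * x + t} : ℝ) ≤
        #{x ∈ window y B | x ≡ x₀ [ZMOD p]} := mod_cast card_le_card hsub
    linarith [(abs_le.mp (abs_card_window_modEq_sub_le hp.pos x₀ y B)).2]

lemma card_primeFactors_gt_le {N X L : ℕ} (hN : N ≠ 0) (hX : 1 < X) (hNX : N ≤ X ^ L) :
    #{p ∈ N.primeFactors | X < p} ≤ L := by
  refine (Nat.pow_le_pow_iff_right hX).mp ?_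
  calc X ^ #{p ∈ N.primeFactors | X < p}
      ≤ ∏ p ∈ N.primeFactors with X < p, p :=
        pow_card_le_prod _ _ _ fun p hp => (mem_filter.mp hp).2.le
    _ ≤ N := Nat.le_of_dvd (Nat.pos_of_ne_zero hN)
        ((prod_dvd_prod_of_subset _ _ _ (filter_subset _ _)).trans (Nat.prod_primeFactors_dvd N))
    _ ≤ X ^ L := hNX

lemma card_box_dvd_le {p B : ℕ} (hp : p.Prime) (hpB : p ≤ 2 * B) {m : ℤ} (hm : ¬(p : ℤ) ∣ m)
    (s t x y : ℤ) :
    (#({a ∈ window x B | (p : ℤ) ∣ m * a + s} ×ˢ {b ∈ window y B | (p : ℤ) ∣ m * b + t}) : ℝ) ≤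
      4 * (2 * (B : ℝ)) ^ 2 * ((p : ℝ) ^ 2)⁻¹ := by
  have hp₀ : (0 : ℝ) < p := mod_cast hp.pos
  have hpB' : (p : ℝ) ≤ 2 * B := mod_cast hpB
  have hside : 2 * (B : ℝ) / p + 1 ≤ 2 * (2 * B) / p := by
    rw [div_add_one hp₀.ne']
    gcongr
    linarith
  rw [card_product, Nat.cast_mul]
  calc _ ≤ 2 * (2 * (B : ℝ)) / p * (2 * (2 * B) / p) :=
        mul_le_mul ((card_window_dvd_le hp hm s x B).trans hside)
          ((card_window_dvd_le hp hm t y B).trans hside) (by positivity) (by positivity)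
    _ = 4 * (2 * (B : ℝ)) ^ 2 * ((p : ℝ) ^ 2)⁻¹ := by
        field_simp
        ring

open scoped Classical in
lemma card_medium_prime_le {T : ℕ} (hT : 0 < T) (m s t x y : ℤ) (B : ℕ) :
    (#{q ∈ window x B ×ˢ window y B | ∃ p ∈ Ioc T (2 * B), p.Prime ∧ ¬(p : ℤ) ∣ m ∧
      (p : ℤ) ∣ m * q.1 + s ∧ (p : ℤ) ∣ m * q.2 + t} : ℝ) ≤ 4 * (2 * B) ^ 2 / T := by
  set P : Finset ℕ := {p ∈ Ioc T (2 * B) | p.Prime ∧ ¬(p : ℤ) ∣ m} with hP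
  let box (p : ℕ) := {x ∈ window x B | (p : ℤ) ∣ m * x + s} ×ˢ
    {y ∈ window y B | (p : ℤ) ∣ m * y + t}
  have hsum : ∑ p ∈ P, ((p : ℝ) ^ 2)⁻¹ ≤ (T : ℝ)⁻¹ := by
    obtain hTB | hTB := le_or_gt T (2 * B)
    · calc ∑ p ∈ P, ((p : ℝ) ^ 2)⁻¹ ≤ ∑ p ∈ Ioc T (2 * B), ((p : ℝ) ^ 2)⁻¹ :=
            sum_le_sum_of_subset_of_nonneg (filter_subset _ _) fun _ _ _ => by positivity
        _ ≤ (T : ℝ)⁻¹ - ((2 * B : ℕ) : ℝ)⁻¹ := sum_Ioc_inv_sq_le_sub hT.ne' hTB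
        _ ≤ (T : ℝ)⁻¹ := sub_le_self _ (by positivity)
    · rw [hP, Ioc_eq_empty_of_le hTB.le, filter_empty, sum_empty]
      positivity
  have hcover : {q ∈ window x B ×ˢ window y B | ∃ p ∈ Ioc T (2 * B), p.Prime ∧ ¬(p : ℤ) ∣ m ∧
      (p : ℤ) ∣ m * q.1 + s ∧ (p : ℤ) ∣ m * q.2 + t} ⊆ P.biUnion box := by
    intro q hq
    simp only [hP, box, mem_biUnion, mem_filter, mem_product] at hq ⊢
    tauto
  calc _ ≤ ((∑ p ∈ P, #(box p) : ℕ) : ℝ) := mod_cast (card_le_card hcover).trans card_biUnion_le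
    _ ≤ ∑ p ∈ P, 4 * (2 * (B : ℝ)) ^ 2 * ((p : ℝ) ^ 2)⁻¹ := by
        rw [Nat.cast_sum]
        refine sum_le_sum fun p hp => ?_
        rw [hP, mem_filter, mem_Ioc] at hp
        exact card_box_dvd_le hp.2.1 hp.1.2 hp.2.2 s t x y
    _ ≤ 4 * (2 * B) ^ 2 / T := by
        rw [← mul_sum, div_eq_mul_inv]
        gcongr

open scoped Classical in
lemma card_window_hasCommonPrime_le {B L : ℕ} (hB : 0 < B) {u : ℤ} (hu : u ≠ 0)
    (huB : |u| ≤ (2 * B) ^ L) (m t y : ℤ) :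
    #{x ∈ window y B | HasCommonPrime (2 * B) m u (m * x + t)} ≤ L := by
  set P := {p ∈ u.natAbs.primeFactors | 2 * B < p ∧ ¬(p : ℤ) ∣ m} with hP
  have hcard : #P ≤ L := by
    refine (card_le_card (monotone_filter_right _ fun _ _ h => h.1)).trans
      (card_primeFactors_gt_le (Int.natAbs_ne_zero.mpr hu) (by omega) ?_)
    rw [Int.abs_eq_natAbs] at huB
    exact_mod_cast huB
  have hroot : ∀ p ∈ P, #{x ∈ window y B | (p : ℤ) ∣ m * x + t} ≤ 1 := fun p hp => by
    rw [hP, mem_filter] at hp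
    have hlarge : (2 * B : ℝ) / p < 1 :=
      (div_lt_one (mod_cast (Nat.prime_of_mem_primeFactors hp.1).pos)).mpr (mod_cast hp.2.1)
    have hlt : (#{x ∈ window y B | (p : ℤ) ∣ m * x + t} : ℝ) < (2 : ℕ) := by
      push_cast
      linarith [card_window_dvd_le (Nat.prime_of_mem_primeFactors hp.1) hp.2.2 t y B]
    exact Nat.le_of_lt_succ (mod_cast hlt)
  have hcover : {x ∈ window y B | HasCommonPrime (2 * B) m u (m * x + t)} ⊆
      P.biUnion fun p => {x ∈ window y B | (p : ℤ) ∣ m * x + t} := by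
    intro x hx
    rw [mem_filter] at hx
    obtain ⟨hxy, p, hp, hpB, hpm, hpu, hpx⟩ := hx
    simp only [hP, mem_biUnion, mem_filter, Nat.mem_primeFactors]
    exact ⟨p, ⟨⟨hp, Int.natCast_dvd.mp hpu, Int.natAbs_ne_zero.mpr hu⟩, hpB, hpm⟩, hxy, hpx⟩
  calc _ ≤ #P * 1 := (card_le_card hcover).trans (card_biUnion_le_card_mul _ _ _ hroot)
    _ ≤ L := by rwa [mul_one]

open scoped Classical in
lemma card_large_prime_le {B L : ℕ} (hB : 0 < B) {m s x : ℤ}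
    (hL : ∀ a ∈ window x B, |m * a + s| ≤ (2 * B) ^ L) (t y : ℤ) :
    #{q ∈ window x B ×ˢ window y B | HasCommonPrime (2 * B) m (m * q.1 + s) (m * q.2 + t)} ≤
      2 * B * (L + 1) := by
  by_cases hm : m = 0
  · rw [filter_false_of_mem fun q _ ⟨p, _, _, hpm, _⟩ => hpm (hm ▸ dvd_zero _), card_empty]
    exact Nat.zero_le _
  have hzero : #{a ∈ window x B | m * a + s = 0} ≤ 1 := card_le_one.mpr fun a ha b hb => by
    rw [mem_filter] at ha hb
    exact mul_left_cancel₀ hm (add_right_cancel (ha.2.trans hb.2.symm))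
  have hfiber : ∀ a ∈ window x B,
      #{b ∈ window y B | HasCommonPrime (2 * B) m (m * a + s) (m * b + t)} ≤
        L + 2 * B * if m * a + s = 0 then 1 else 0 := fun a ha => by
    split_ifs with h
    · rw [mul_one]
      exact (card_filter_le _ _).trans ((card_window y B).trans_le (Nat.le_add_left _ _))
    · exact card_window_hasCommonPrime_le hB h (hL a ha) m t y
  calc _ = ∑ a ∈ window x B,
        #{b ∈ window y B | HasCommonPrime (2 * B) m (m * a + s) (m * b + t)} := by
        simp only [card_filter, sum_product]
    _ ≤ ∑ a ∈ window x B, (L + 2 * B * if m * a + s = 0 then 1 else 0) := sum_le_sum hfiber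
    _ = 2 * B * L + 2 * B * #{a ∈ window x B | m * a + s = 0} := by
        rw [sum_add_distrib, sum_const, card_window, smul_eq_mul, ← mul_sum, card_filter]
    _ ≤ 2 * B * (L + 1) := by
        rw [mul_add]
        gcongr

open scoped Classical in
lemma card_hasCommonPrime_le {B L T : ℕ} (hT : 0 < T) (hB : 0 < B) (hTB : (L + 1) * T ≤ 2 * B)
    {m s x : ℤ} (hL : ∀ a ∈ window x B, |m * a + s| ≤ (2 * B) ^ L) (t y : ℤ) :
    (#{q ∈ window x B ×ˢ window y B | HasCommonPrime T m (m * q.1 + s) (m * q.2 + t)} : ℝ) ≤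
      5 / T * (2 * B) ^ 2 := by
  have hsplit : {q ∈ window x B ×ˢ window y B |
      HasCommonPrime T m (m * q.1 + s) (m * q.2 + t)} ⊆
      {q ∈ window x B ×ˢ window y B | ∃ p ∈ Ioc T (2 * B), p.Prime ∧ ¬(p : ℤ) ∣ m ∧
        (p : ℤ) ∣ m * q.1 + s ∧ (p : ℤ) ∣ m * q.2 + t} ∪
      {q ∈ window x B ×ˢ window y B |
        HasCommonPrime (2 * B) m (m * q.1 + s) (m * q.2 + t)} := by
    rw [← filter_or]
    refine monotone_filter_right _ fun q _ ⟨p, hp, hTp, hdvd⟩ => ?_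
    obtain hpB | hpB := le_or_gt p (2 * B)
    · exact .inl ⟨p, mem_Ioc.mpr ⟨hTp, hpB⟩, hp, hdvd⟩
    · exact .inr ⟨p, hp, hpB, hdvd⟩
  have hlarge : (2 * B * (L + 1) : ℝ) ≤ (2 * B) ^ 2 / T := by
    rw [le_div_iff₀ (mod_cast hT), sq, mul_assoc]
    exact mul_le_mul_of_nonneg_left (mod_cast hTB) (by positivity)
  calc _ ≤ _ := Nat.cast_le.mpr ((card_le_card hsplit).trans (card_union_le _ _))
    _ ≤ 4 * (2 * (B : ℝ)) ^ 2 / T + 2 * B * (L + 1) := by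
        rw [Nat.cast_add]
        exact add_le_add (card_medium_prime_le hT m s t x y B)
          (mod_cast card_large_prime_le hB hL t y)
    _ ≤ 4 * (2 * (B : ℝ)) ^ 2 / T + (2 * B) ^ 2 / T := by gcongr
    _ = 5 / T * (2 * B) ^ 2 := by ring

variable {ι : Type*} [Fintype ι] [DecidableEq ι]

lemma cubeCount_hasCommonPrime_fiber_le {a b : ι} {μ φ ψ : (ι → ℤ) → ℤ}
    (hμ : DependsOn μ {a, b}ᶜ) (hφ : DependsOn (fun f => φ f - μ f * f a) {a, b}ᶜ)
    (hψ : DependsOn (fun f => ψ f - μ f * f b) {a, b}ᶜ) {B L T : ℕ} (hT : 0 < T) (hB : 0 < B)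
    (hTB : (L + 1) * T ≤ 2 * B) {z : ι → ℤ} (hL : ∀ f ∈ cube z B, |φ f| ≤ (2 * B) ^ L)
    {f₀ : ι → ℤ} (hf₀ : f₀ ∈ cube z B) :
    (cubeCount {f ∈ {f | HasCommonPrime T (μ f) (φ f) (ψ f)} |
      f ∘ (Subtype.val : ({a, b}ᶜ : Finset ι) → ι) = f₀ ∘ Subtype.val} z B : ℝ) ≤
      5 / T * (2 * B) ^ 2 := by
  classical
  set m := μ f₀
  set s := φ f₀ - m * f₀ a
  set t := ψ f₀ - m * f₀ b
  have affine {f : ι → ℤ} (hf : ∀ i ∈ ({a, b}ᶜ : Set ι), f i = f₀ i) :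
      μ f = m ∧ φ f = m * f a + s ∧ ψ f = m * f b + t := by
    refine ⟨hμ hf, ?_, ?_⟩
    · linear_combination hφ hf + f a * hμ hf
    · linear_combination hψ hf + f b * hμ hf
  have agree {f : ι → ℤ} (hf : f ∘ Subtype.val = f₀ ∘ (Subtype.val : ({a, b}ᶜ : Finset ι) → ι))
      {i : ι} (hi : i ∈ ({a, b}ᶜ : Set ι)) : f i = f₀ i :=
    congrFun hf ⟨i, by simpa using hi⟩
  have height : ∀ x ∈ window (z a) B, |m * x + s| ≤ (2 * B) ^ L := fun x hx => by
    have hval := (affine (f := Function.update f₀ a x) fun i hi =>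
      Function.update_of_ne (fun h => hi (.inl h)) _ _).2.1
    rw [Function.update_self] at hval
    rw [← hval]
    refine hL _ (mem_cube.mpr fun i => ?_)
    obtain rfl | hi := eq_or_ne i a
    · rwa [Function.update_self]
    · rw [Function.update_of_ne hi]
      exact mem_cube.mp hf₀ i
  refine le_trans ?_ (card_hasCommonPrime_le hT hB hTB height t (z b))
  refine Nat.cast_le.mpr (cubeCount_le_card_of_injOn (fun f => (f a, f b)) ?_ ?_)
  · rintro f hfz ⟨hcommon, hfg⟩
    obtain ⟨hμf, hφf, hψf⟩ := affine fun i => agree hfg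
    rw [Set.mem_ofPred_eq, hμf, hφf, hψf] at hcommon
    exact mem_filter.mpr
      ⟨mem_product.mpr ⟨mem_cube.mp hfz a, mem_cube.mp hfz b⟩, hcommon⟩
  · rintro f ⟨⟨-, hf⟩, -⟩ f' ⟨⟨-, hf'⟩, -⟩ hff'
    obtain ⟨ha, hb⟩ := Prod.mk.inj hff'
    ext i
    by_cases hi : i ∈ ({a, b}ᶜ : Set ι)
    · exact (agree hf hi).trans (agree hf' hi).symm
    · obtain rfl | rfl := Set.notMem_compl_iff.mp hi
      exacts [ha, hb]

/- The primes in `(T, 2B]` are handled by counting solutions modulo each of them; a prime above `2B`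
leaves at most one value of `f b`, and `φ f ≠ 0` has boundedly many such prime factors. -/
theorem upperDensityLE_hasCommonPrime {a b : ι} (hab : a ≠ b) {μ φ ψ : (ι → ℤ) → ℤ}
    (hμ : DependsOn μ {a, b}ᶜ) (hφ : DependsOn (fun f => φ f - μ f * f a) {a, b}ᶜ)
    (hψ : DependsOn (fun f => ψ f - μ f * f b) {a, b}ᶜ) {L : ℕ}
    (hL : ∀ z : ι → ℤ, ∀ᶠ B : ℕ in atTop, ∀ f ∈ cube z B, |φ f| ≤ (2 * B) ^ L) {T : ℕ}
    (hT : 0 < T) :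
    UpperDensityLE {f | HasCommonPrime T (μ f) (φ f) (ψ f)} (5 / T) := by
  intro z
  filter_upwards [hL z, eventually_gt_atTop 0, eventually_ge_atTop ((L + 1) * T)] with B hLB hB hTB
  refine (cubeCount_le_of_fiber_le (by positivity) fun g hg _ =>
    cubeCount_hasCommonPrime_fiber_le hμ hφ hψ hT hB (by omega) hLB hg).trans_eq ?_
  have hcard : 2 ≤ Fintype.card ι := (card_pair hab).symm.trans_le (card_le_univ _)
  rw [Fintype.card_coe, card_compl, card_pair hab, mul_assoc, ← pow_add, Nat.add_sub_cancel' hcard]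

end Sieve

/-! ### Loss of column rank modulo large primes -/

section ColumnRank

open Finset Matrix Topology

lemma linearIndependent_col_iff_exists_det_submatrix_ne_zero {F m κ : Type*} [Field F] [Finite m]
    [Fintype κ] [DecidableEq κ] {C : Matrix m κ F} :
    LinearIndependent F C.col ↔ ∃ I : κ → m, (C.submatrix I id).det ≠ 0 := by
  have := Fintype.ofFinite m
  refine ⟨fun hC => ?_, fun ⟨I, hI⟩ => ?_⟩
  · obtain ⟨τ, a, ha, hspan, hind⟩ := exists_linearIndependent' F C.row
    have := Finite.of_injective a ha
    have := Fintype.ofFinite τ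
    have hcard : Fintype.card τ = Fintype.card κ := by
      rw [← finrank_span_eq_card hind, hspan, ← rank_eq_finrank_span_row, ← rank_transpose]
      exact hC.rank_matrix
    let e : κ ≃ τ := Fintype.equivOfCardEq hcard.symm
    refine ⟨a ∘ e, IsUnit.ne_zero ((isUnit_iff_isUnit_det _).mp ?_)⟩
    exact linearIndependent_rows_iff_isUnit.mp (hind.comp e e.injective)
  · have hrows := linearIndependent_cols_iff_isUnit.mpr
      ((isUnit_iff_isUnit_det _).mpr (isUnit_iff_ne_zero.mpr hI))
    exact LinearIndependent.of_comp (LinearMap.funLeft F F I) hrows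

variable {m κ : Type*}

/-- The columns of an integer matrix are linearly independent modulo `p`. -/
def ColIndepMod (p : ℕ) (A : Matrix m κ ℤ) : Prop :=
  LinearIndependent (ZMod p) (A.map (Int.cast : ℤ → ZMod p)).col

lemma colIndepMod_iff_exists_not_dvd_det [Finite m] [Fintype κ] [DecidableEq κ] {p : ℕ}
    (hp : p.Prime) {A : Matrix m κ ℤ} :
    ColIndepMod p A ↔ ∃ I : κ → m, ¬(p : ℤ) ∣ (A.submatrix I id).det := by
  have : Fact p.Prime := ⟨hp⟩
  simp only [ColIndepMod, linearIndependent_col_iff_exists_det_submatrix_ne_zero, submatrix_map,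
    ← Int.cast_det, ne_eq, ZMod.intCast_zmod_eq_zero_iff_dvd]

/-- The matrix with a given vectorization `Matrix.vec`. -/
def unvec {R : Type*} (f : κ × m → R) : Matrix m κ R := Matrix.of fun i j => f (j, i)

/-- The minor of `A` on the rows `I` and its first `k` columns. -/
def initialMinor {k : ℕ} (A : Matrix m (Fin (k + 1)) ℤ) (I : Fin k → m) : ℤ :=
  (A.submatrix I Fin.castSucc).det

/-- The minor of `A` on the rows `I` and `j` and all `k + 1` columns. -/
def borderedMinor {k : ℕ} (A : Matrix m (Fin (k + 1)) ℤ) (I : Fin k → m) (j : m) : ℤ :=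
  (A.submatrix (Fin.snoc (α := fun _ => m) I j) id).det

lemma exists_minors_of_colIndepMod_castSucc [Fintype m] {k : ℕ} (hk : k + 1 < Fintype.card m)
    {p : ℕ} (hp : p.Prime) {A : Matrix m (Fin (k + 1)) ℤ}
    (hinitial : ColIndepMod p (A.submatrix id Fin.castSucc)) (hA : ¬ColIndepMod p A) :
    ∃ (I : Fin k → m) (i j : m), i ≠ j ∧ i ∉ Set.range I ∧ j ∉ Set.range I ∧
      ¬(p : ℤ) ∣ initialMinor A I ∧ (p : ℤ) ∣ borderedMinor A I i ∧
      (p : ℤ) ∣ borderedMinor A I j := by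
  classical
  obtain ⟨I, hI⟩ := (colIndepMod_iff_exists_not_dvd_det hp).mp hinitial
  have hcard : 1 < #(univ.image I)ᶜ := by
    have := (card_image_le (s := univ) (f := I)).trans_eq (card_fin k)
    rw [card_compl]
    omega
  obtain ⟨i, hi, j, hj, hij⟩ := one_lt_card.mp hcard
  simp only [mem_compl, mem_image, mem_univ, true_and] at hi hj
  have hdvd (l : m) : (p : ℤ) ∣ borderedMinor A I l := by
    by_contra hl
    exact hA ((colIndepMod_iff_exists_not_dvd_det hp).mpr ⟨_, hl⟩)
  exact ⟨I, i, j, hij, hi, hj, hI, hdvd i, hdvd j⟩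

section Minors

variable {k : ℕ} (I : Fin k → m) (j : m)

lemma dependsOn_initialMinor :
    DependsOn (fun f : Fin (k + 1) × m → ℤ => initialMinor (unvec f) I)
      {x | x.1 = Fin.last k → x.2 ∈ Set.range I} := fun f g hfg => by
  refine congrArg det (Matrix.ext fun a b => hfg _ fun h => ?_)
  exact absurd h (Fin.castSucc_ne_last b)

lemma dependsOn_borderedMinor_sub :
    DependsOn (fun f : Fin (k + 1) × m → ℤ =>
      borderedMinor (unvec f) I j - initialMinor (unvec f) I * f (Fin.last k, j))
      {x | x.1 = Fin.last k → x.2 ∈ Set.range I} := by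
  have laplace (f : Fin (k + 1) × m → ℤ) :
      borderedMinor (unvec f) I j - initialMinor (unvec f) I * f (Fin.last k, j) =
        ∑ a : Fin k, (-1) ^ (a + k : ℕ) * f (Fin.last k, I a) *
          ((unvec f).submatrix (Fin.snoc (α := fun _ => m) I j ∘ a.castSucc.succAbove)
            Fin.castSucc).det := by
    rw [borderedMinor, det_succ_column _ (Fin.last k), Fin.sum_univ_castSucc]
    simp [initialMinor, unvec, Fin.succAbove_last, Function.comp_def, mul_comm]
  intro f g hfg
  simp only [laplace]
  refine sum_congr rfl fun a _ => ?_
  rw [hfg (Fin.last k, I a) fun _ => ⟨a, rfl⟩]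
  congr 2
  exact Matrix.ext fun _ b => hfg _ fun h => absurd h (Fin.castSucc_ne_last b)

lemma eventually_abs_borderedMinor_le [Fintype m] [DecidableEq m] (z : Fin (k + 1) × m → ℤ) :
    ∀ᶠ B : ℕ in atTop, ∀ f ∈ cube z B, |borderedMinor (unvec f) I j| ≤ (2 * B) ^ (k + 2) := by
  filter_upwards [eventually_all.mpr fun x => eventually_ge_atTop (z x).natAbs,
    eventually_ge_atTop (k + 1).factorial] with B hz hB f hf
  have hentry (a b : Fin (k + 1)) :
      |(unvec f).submatrix (Fin.snoc (α := fun _ => m) I j) id a b| ≤ 2 * B := by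
    set x : Fin (k + 1) × m := (b, Fin.snoc (α := fun _ => m) I j a)
    have hfx := mem_window.mp (mem_cube.mp hf x)
    have hzx := hz x
    exact abs_le.mpr ⟨by change _ ≤ f x; omega, by change f x ≤ _; omega⟩
  have hdet := det_le (abv := AbsoluteValue.abs) hentry
  rw [AbsoluteValue.abs_apply, Fintype.card_fin, nsmul_eq_mul] at hdet
  calc _ ≤ ((k + 1).factorial : ℤ) * (2 * B) ^ (k + 1) := hdet
    _ ≤ 2 * B * (2 * B) ^ (k + 1) := by
      gcongr
      omega
    _ = (2 * B) ^ (k + 2) := (pow_succ' _ _).symm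

end Minors

/-- Integer matrices, in vectorized form, whose columns become dependent modulo some prime
exceeding `T`. -/
def dependentModLarge (m κ : Type*) (T : ℕ) : Set (κ × m → ℤ) :=
  {f | ∃ p : ℕ, p.Prime ∧ T < p ∧ ¬ColIndepMod p (unvec f)}

variable [Fintype m] [DecidableEq m]

lemma dependentModLarge_succ_subset {k : ℕ} (hk : k + 1 < Fintype.card m) (T : ℕ) :
    dependentModLarge m (Fin (k + 1)) T ⊆
      {f | f ∘ Prod.map Fin.castSucc id ∈ dependentModLarge m (Fin k) T} ∪
      ⋃ q ∈ ({q | q.2.1 ≠ q.2.2 ∧ q.2.1 ∉ Set.range q.1 ∧ q.2.2 ∉ Set.range q.1} :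
        Finset ((Fin k → m) × m × m)),
        {f | HasCommonPrime T (initialMinor (unvec f) q.1)
          (borderedMinor (unvec f) q.1 q.2.1) (borderedMinor (unvec f) q.1 q.2.2)} := by
  rintro f ⟨p, hp, hTp, hf⟩
  by_cases hinitial : ColIndepMod p ((unvec f).submatrix id Fin.castSucc)
  · obtain ⟨I, i, j, hij, hi, hj, hdvd⟩ := exists_minors_of_colIndepMod_castSucc hk hp hinitial hf
    refine .inr (Set.mem_biUnion (x := (I, i, j)) ?_ ⟨p, hp, hTp, hdvd⟩)
    exact mem_filter.mpr ⟨mem_univ _, hij, hi, hj⟩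
  · exact .inl ⟨p, hp, hTp, hinitial⟩

lemma upperDensityLE_hasCommonPrime_minors {k : ℕ} {I : Fin k → m} {i j : m} (hij : i ≠ j)
    (hi : i ∉ Set.range I) (hj : j ∉ Set.range I) {T : ℕ} (hT : 0 < T) :
    UpperDensityLE {f | HasCommonPrime T (initialMinor (unvec f) I)
      (borderedMinor (unvec f) I i) (borderedMinor (unvec f) I j)} (5 / T) := by
  have hsub : {x : Fin (k + 1) × m | x.1 = Fin.last k → x.2 ∈ Set.range I} ⊆
      {(Fin.last k, i), (Fin.last k, j)}ᶜ := by
    rintro x hx (rfl | rfl)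
    exacts [hi (hx rfl), hj (hx rfl)]
  exact upperDensityLE_hasCommonPrime (fun h => hij (Prod.mk.inj h).2)
    ((dependsOn_initialMinor I).mono hsub) ((dependsOn_borderedMinor_sub I i).mono hsub)
    ((dependsOn_borderedMinor_sub I j).mono hsub) (eventually_abs_borderedMinor_le I i) hT

theorem eventually_upperDensityLE_dependentModLarge {k : ℕ} (hk : k < Fintype.card m) {ε : ℝ}
    (hε : 0 < ε) :
    ∀ᶠ T : ℕ in atTop, UpperDensityLE (dependentModLarge m (Fin k) T) ε := by
  induction k generalizing ε with
  | zero =>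
    refine Eventually.of_forall fun T z => Eventually.of_forall fun B => ?_
    have hempty : dependentModLarge m (Fin 0) T = ∅ :=
      Set.eq_empty_of_forall_notMem fun f ⟨_, _, _, hf⟩ => hf linearIndependent_empty_type
    simp only [hempty, cubeCount, Set.mem_empty_iff_false, filter_false, card_empty, Nat.cast_zero]
    positivity
  | succ k ih =>
    set Q : Finset ((Fin k → m) × m × m) :=
      {q | q.2.1 ≠ q.2.2 ∧ q.2.1 ∉ Set.range q.1 ∧ q.2.2 ∉ Set.range q.1}
    have htail : ∀ᶠ T : ℕ in atTop, #Q * (5 / T : ℝ) < ε / 2 := by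
      have hlim := (tendsto_const_div_atTop_nhds_zero_nat (5 : ℝ)).const_mul (#Q : ℝ)
      rw [mul_zero] at hlim
      exact hlim.eventually_lt_const (half_pos hε)
    filter_upwards [ih (Nat.lt_of_succ_lt hk) (half_pos hε), htail, eventually_gt_atTop 0]
      with T hinitial hT hT₀
    have hprod : (Prod.map Fin.castSucc id : Fin k × m → Fin (k + 1) × m).Injective :=
      (Fin.castSucc_injective k).prodMap Function.injective_id
    have hbad := UpperDensityLE.biUnion Q fun q hq => by
      obtain ⟨-, hij, hi, hj⟩ := mem_filter.mp hq
      exact upperDensityLE_hasCommonPrime_minors hij hi hj hT₀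
    exact ((hinitial.comap hprod).union hbad).mono (dependentModLarge_succ_subset hk T)
      (by linarith)

end ColumnRank

/-! ### Primitive matrices and Euler products -/

section Primitive

open Finset Matrix Topology
open scoped Kronecker

lemma summable_inv_pow_and_tsum_eq_zetaR {s : ℕ} (hs : 1 < s) :
    Summable (fun n : ℕ => ((n : ℝ) ^ s)⁻¹) ∧ ∑' n : ℕ, ((n : ℝ) ^ s)⁻¹ = zetaR s := by
  have hsum : Summable (fun n : ℕ => ((n : ℝ) ^ s)⁻¹) := Real.summable_nat_pow_inv.mpr hs
  refine ⟨hsum, ?_⟩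
  rw [hsum.tsum_eq_zero_add, Nat.cast_zero, zero_pow (by omega), _root_.inv_zero, zero_add]
  simp only [zetaR, Nat.cast_add_one, one_div]

lemma zetaR_pos {s : ℕ} (hs : 1 < s) : 0 < zetaR s := by
  obtain ⟨hsum, hzeta⟩ := summable_inv_pow_and_tsum_eq_zetaR hs
  exact hzeta ▸ hsum.tsum_pos (fun n => by positivity) 1 (by simp)

lemma tendsto_prod_primesBelow_one_sub_inv_pow {s : ℕ} (hs : 1 < s) :
    Tendsto (fun T : ℕ => ∏ p ∈ Nat.primesBelow T, (1 - ((p : ℝ) ^ s)⁻¹)) atTop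
      (𝓝 (zetaR s)⁻¹) := by
  obtain ⟨hsum, hzeta⟩ := summable_inv_pow_and_tsum_eq_zetaR hs
  let f : ℕ →*₀ ℝ :=
    { toFun := fun n => ((n : ℝ) ^ s)⁻¹
      map_zero' := by simp [show s ≠ 0 by omega]
      map_one' := by simp
      map_mul' := fun a b => by rw [Nat.cast_mul, mul_pow, mul_inv] }
  have heuler : Tendsto (fun T : ℕ => ∏ p ∈ Nat.primesBelow T, (1 - f p)⁻¹) atTop
      (𝓝 (zetaR s)) := by
    rw [← hzeta]
    exact EulerProduct.eulerProduct_completely_multiplicative (f := f) hsum.norm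
  refine (heuler.inv₀ (zetaR_pos hs).ne').congr fun T => ?_
  simp only [← prod_inv_distrib, inv_inv]
  rfl

section Reduction

variable {σ ι : Type*} (a : σ → ℕ)

/-- Simultaneous entrywise reduction of integer vectors modulo each `a s`. -/
def reduceMod : (ι → ℤ) →+ ∀ s, ι → ZMod (a s) :=
  AddMonoidHom.pi fun s => (Int.castAddHom (ZMod (a s))).compLeft ι

lemma reduceMod_surjective [Finite σ] (ha : Pairwise (Function.onFun Nat.Coprime a)) :
    Function.Surjective (reduceMod (ι := ι) a) := fun c => by
  have := Fintype.ofFinite σ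
  let e := ZMod.prodEquivPi a ha
  have hcrt (i : ι) : ∃ x : ℤ, ∀ s, (x : ZMod (a s)) = c s i := by
    obtain ⟨x, hx⟩ := ZMod.intCast_surjective (e.symm fun s => c s i)
    refine ⟨x, fun s => ?_⟩
    have hes : e x = fun s => c s i := by rw [hx, RingEquiv.apply_symm_apply]
    rw [map_intCast] at hes
    exact congrFun hes s
  choose f hf using hcrt
  exact ⟨f, funext fun s => funext fun i => hf i s⟩

end Reduction

variable {m κ : Type*}

lemma colIndepMod_of_mul [Finite m] [Fintype κ] {p : ℕ} (hp : p.Prime) {P : Matrix m κ ℤ}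
    {H : Matrix κ κ ℤ} (h : ColIndepMod p (P * H)) : ColIndepMod p P := by
  classical
  obtain ⟨I, hI⟩ := (colIndepMod_iff_exists_not_dvd_det hp).mp h
  refine (colIndepMod_iff_exists_not_dvd_det hp).mpr ⟨I, fun hdvd => hI ?_⟩
  rw [submatrix_mul _ _ I id id Function.bijective_id, det_mul]
  exact hdvd.mul_right _

/-- The columns stay linearly independent modulo every prime; equivalently, they span a direct
summand of the lattice of integer vectors. -/
def IsColPrimitive (P : Matrix m κ ℤ) : Prop := ∀ p : ℕ, p.Prime → ColIndepMod p P

variable [Fintype m]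

lemma card_linearIndependent_col_div_card {F : Type*} [Field F] [Finite F] {k : ℕ}
    (hk : k ≤ Fintype.card m) :
    (Nat.card {f : Fin k × m → F | LinearIndependent F (unvec f).col} : ℝ) /
      Nat.card (Fin k × m → F) =
      ∏ i : Fin k, (1 - ((Nat.card F : ℝ) ^ (Fintype.card m - i))⁻¹) := by
  have := Fintype.ofFinite F
  set q := Nat.card F
  have hq : 0 < q := Nat.card_pos
  have hindep : Nat.card {f : Fin k × m → F | LinearIndependent F (unvec f).col} =
      ∏ i : Fin k, (q ^ Fintype.card m - q ^ (i : ℕ)) := by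
    rw [Nat.card_congr ((Equiv.curry (Fin k) m F).subtypeEquiv (p := (· ∈ _))
      (q := fun v => LinearIndependent F v) fun _ => Iff.rfl),
      card_linearIndependent (by rwa [Module.finrank_fintype_fun_eq_card]),
      Module.finrank_fintype_fun_eq_card, Fintype.card_eq_nat_card]
  have hall : Nat.card (Fin k × m → F) = ∏ _i : Fin k, q ^ Fintype.card m := by
    rw [Nat.card_fun, Nat.card_prod, Nat.card_fin, Nat.card_eq_fintype_card (α := m), mul_comm,
      pow_mul, prod_const, card_fin]
  rw [hindep, hall, Nat.cast_prod, Nat.cast_prod, ← prod_div_distrib]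
  refine prod_congr rfl fun i _ => ?_
  have hi : (i : ℕ) ≤ Fintype.card m := i.2.le.trans hk
  rw [Nat.cast_sub (Nat.pow_le_pow_right hq hi), Nat.cast_pow, Nat.cast_pow, sub_div,
    div_self (by positivity), pow_sub₀ _ (by positivity) hi, mul_inv, inv_inv, div_eq_inv_mul]

section RightMultiplication

variable [DecidableEq m] [Fintype κ]

/-- Right multiplication by `H` on vectorized matrices. -/
def rightMul (H : Matrix κ κ ℤ) : (κ × m → ℤ) →+ (κ × m → ℤ) :=
  (Hᵀ ⊗ₖ (1 : Matrix m m ℤ)).mulVecLin.toAddMonoidHom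

lemma unvec_rightMul (H : Matrix κ κ ℤ) (f : κ × m → ℤ) :
    unvec (rightMul H f) = unvec f * H := by
  have hvec := kronecker_mulVec_vec (1 : Matrix m m ℤ) (unvec f) Hᵀ
  rw [Matrix.one_mul, transpose_transpose] at hvec
  exact congrArg unvec hvec

variable [DecidableEq κ]

lemma index_range_mulVecLin {ι : Type*} [Fintype ι] [DecidableEq ι] {M : Matrix ι ι ℤ}
    (hM : Function.Injective M.mulVecLin) :
    M.mulVecLin.toAddMonoidHom.range.index = M.det.natAbs := by
  rw [← LinearMap.det_toLin' M]
  exact (Submodule.natAbs_det_equiv _ (LinearEquiv.ofInjective M.mulVecLin hM)).symm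

lemma rightMul_injective {H : Matrix κ κ ℤ} (hH : H.det ≠ 0) :
    Function.Injective (rightMul (m := m) H) := by
  refine (injective_iff_map_eq_zero _).mpr fun f hf => eq_zero_of_mulVec_eq_zero ?_ hf
  rw [det_kronecker, det_one, one_pow, mul_one, det_transpose]
  exact pow_ne_zero _ hH

lemma index_range_rightMul {H : Matrix κ κ ℤ} (hH : H.det ≠ 0) :
    (rightMul (m := m) H).range.index = H.det.natAbs ^ Fintype.card m := by
  rw [rightMul, index_range_mulVecLin (rightMul_injective hH), det_kronecker, det_one, one_pow,
    mul_one, det_transpose, Int.natAbs_pow]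

end RightMultiplication

variable [DecidableEq m] {k : ℕ} {H : Matrix (Fin k) (Fin k) ℤ}

lemma hasCubeDensity_rightMul_colIndepMod_primesBelow (hk : k ≤ Fintype.card m)
    (hH : H.det ≠ 0) (T : ℕ) :
    HasCubeDensity
      (rightMul (m := m) H '' {f | ∀ p ∈ Nat.primesBelow T, ColIndepMod p (unvec f)})
      ((∏ i : Fin k, ∏ p ∈ Nat.primesBelow T, (1 - ((p : ℝ) ^ (Fintype.card m - i))⁻¹)) /
        (H.det.natAbs : ℝ) ^ Fintype.card m) := by
  have (p : Nat.primesBelow T) : Fact p.1.Prime := ⟨Nat.prime_of_mem_primesBelow p.2⟩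
  let R (p : Nat.primesBelow T) : Set (Fin k × m → ZMod p) :=
    {f | LinearIndependent (ZMod p) (unvec f).col}
  have hcoprime : Pairwise (Function.onFun Nat.Coprime fun p : Nat.primesBelow T => (p : ℕ)) :=
    fun p q hpq => (Nat.coprime_primes (this p).out (this q).out).mpr (Subtype.coe_injective.ne hpq)
  have hdensity := hasCubeDensity_image_preimage
    (reduceMod_surjective (ι := Fin k × m) _ hcoprime) (rightMul_injective hH)
    (by rw [index_range_rightMul hH]; exact pow_ne_zero _ (Int.natAbs_ne_zero.mpr hH))
    (Set.univ.pi R)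
  have hset : {f : Fin k × m → ℤ | ∀ p ∈ Nat.primesBelow T, ColIndepMod p (unvec f)} =
      reduceMod (fun p : Nat.primesBelow T => (p : ℕ)) ⁻¹' Set.univ.pi R :=
    Set.ext fun f => ⟨fun h p _ => h p p.2, fun h p hp => h ⟨p, hp⟩ trivial⟩
  have hratio : (Nat.card (Set.univ.pi R) : ℝ) /
      Nat.card (∀ p : Nat.primesBelow T, Fin k × m → ZMod p) =
      ∏ i : Fin k, ∏ p ∈ Nat.primesBelow T, (1 - ((p : ℝ) ^ (Fintype.card m - i))⁻¹) := by
    rw [Nat.card_congr (Equiv.Set.univPi R), Nat.card_pi, Nat.card_pi, Nat.cast_prod,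
      Nat.cast_prod, ← prod_div_distrib, Finset.prod_comm, ← prod_coe_sort (Nat.primesBelow T)]
    refine prod_congr rfl fun p _ => ?_
    rw [card_linearIndependent_col_div_card hk, Nat.card_zmod]
  rwa [hset, ← hratio, div_div, ← Nat.cast_pow, ← index_range_rightMul (m := m) hH]

lemma rightMul_image_colIndepMod_primesBelow_subset (T : ℕ) :
    rightMul (m := m) H '' {f | ∀ p ∈ Nat.primesBelow (T + 1), ColIndepMod p (unvec f)} ⊆
      rightMul H '' {f | IsColPrimitive (unvec f)} ∪ dependentModLarge m (Fin k) T := by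
  rintro _ ⟨f, hf, rfl⟩
  by_cases hprim : IsColPrimitive (unvec f)
  · exact .inl ⟨f, hprim, rfl⟩
  · simp only [IsColPrimitive, not_forall] at hprim
    obtain ⟨p, hp, hpf⟩ := hprim
    refine .inr ⟨p, hp, ?_, fun h => hpf (colIndepMod_of_mul hp (unvec_rightMul H f ▸ h))⟩
    by_contra hpT
    exact hpf (hf p (Nat.mem_primesBelow.mpr ⟨by omega, hp⟩))

theorem hasCubeDensity_isColPrimitive_mul (hk : k < Fintype.card m) (hH : H.det ≠ 0) :
    HasCubeDensity (unvec ⁻¹' ((· * H) '' {P : Matrix m (Fin k) ℤ | IsColPrimitive P}))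
      ((∏ i : Fin k, (zetaR (Fintype.card m - i))⁻¹) /
        (H.det.natAbs : ℝ) ^ Fintype.card m) := by
  have himage : unvec ⁻¹' ((· * H) '' {P : Matrix m (Fin k) ℤ | IsColPrimitive P}) =
      rightMul H '' {f | IsColPrimitive (unvec f)} := by
    ext f
    constructor
    · rintro ⟨P, hP, hPf⟩
      exact ⟨P.vec, hP, congrArg vec ((unvec_rightMul H P.vec).trans hPf)⟩
    · rintro ⟨g, hg, rfl⟩
      exact ⟨unvec g, hg, (unvec_rightMul H g).symm⟩
  have hlim := (tendsto_finsetProd univ fun (i : Fin k) _ =>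
    tendsto_prod_primesBelow_one_sub_inv_pow (s := Fintype.card m - i) (by omega)).comp
    (tendsto_add_atTop_nat 1)
  rw [himage]
  refine HasCubeDensity.of_approx
    (fun T => hasCubeDensity_rightMul_colIndepMod_primesBelow hk.le hH (T + 1))
    (hlim.div_const _) (fun T => Set.image_mono fun f hf p hp => ?_)
    rightMul_image_colIndepMod_primesBelow_subset
    fun ε hε => eventually_upperDensityLE_dependentModLarge hk hε
  exact hf p (Nat.prime_of_mem_primesBelow hp)

end Primitive

/-! ### Existence of the Hermite normal form -/

section HermiteExistence

open Matrix

section UnimodularFixing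

variable {ι : Type*} [Fintype ι] [DecidableEq ι]

/-- The unimodular matrices that fix every vector supported outside `s`: the row operations which
only ever add multiples of rows in `s`. -/
def unimodularFixing (s : Set ι) : Submonoid (Matrix ι ι ℤ) where
  carrier := {U | IsUnit U.det ∧ ∀ w, (∀ i ∈ s, w i = 0) → U *ᵥ w = w}
  one_mem' := ⟨by rw [det_one]; exact isUnit_one, fun w _ => one_mulVec w⟩
  mul_mem' := fun {U V} hU hV => ⟨by rw [det_mul]; exact hU.1.mul hV.1, fun w hw => by
    rw [← mulVec_mulVec, hV.2 w hw, hU.2 w hw]⟩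

/-- The row operation adding `q i` times row `b` to row `i`, for all `i` at once. -/
def rowShear (b : ι) (q : ι → ℤ) : Matrix ι ι ℤ := 1 + vecMulVec q (Pi.single b 1)

lemma rowShear_mulVec (b : ι) (q w : ι → ℤ) (i : ι) :
    (rowShear b q *ᵥ w) i = w i + q i * w b := by
  rw [rowShear, add_mulVec, one_mulVec, vecMulVec_mulVec, single_one_dotProduct, op_smul_eq_smul,
    Pi.add_apply, Pi.smul_apply, smul_eq_mul, mul_comm]

lemma rowShear_mem_unimodularFixing {s : Set ι} {b : ι} (hb : b ∈ s) {q : ι → ℤ}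
    (hq : IsUnit (1 + q b)) : rowShear b q ∈ unimodularFixing s := by
  refine ⟨?_, fun w hw => funext fun i => by rw [rowShear_mulVec, hw b hb, mul_zero, add_zero]⟩
  rwa [rowShear, vecMulVec_eq Unit, det_one_add_replicateCol_mul_replicateRow,
    single_one_dotProduct]

variable {s : Set ι} {a : ι} {v : ι → ℤ}

lemma eq_zero_of_forall_unimodularFixing_mulVec_nonpos (ha : a ∈ s)
    (h : ∀ U ∈ unimodularFixing s, (U *ᵥ v) a ≤ 0) : ∀ i ∈ s, v i = 0 := by
  have hle : v a ≤ 0 := by simpa only [one_mulVec] using h 1 (one_mem _)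
  have hge : 0 ≤ v a := by
    have hflip := h _ (rowShear_mem_unimodularFixing (q := fun _ => -2) ha (by decide))
    rw [rowShear_mulVec] at hflip
    linarith
  intro i hi
  rcases eq_or_ne i a with rfl | hia
  · exact le_antisymm hle hge
  · have hadd := h _ (rowShear_mem_unimodularFixing (q := Pi.single a (v i)) hi
      (by rw [Pi.single_eq_of_ne hia, add_zero]; exact isUnit_one))
    rw [rowShear_mulVec, Pi.single_eq_same] at hadd
    nlinarith

/- The entry at `a` is the least positive one in the orbit of `v`. Modulo it, an entry in `s` must
vanish: subtracting a nonzero remainder once would give a smaller positive entry at `a`. -/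
lemma exists_unimodularFixing_mulVec_reduced (ha : a ∈ s)
    (hpos : ∃ U ∈ unimodularFixing s, 0 < (U *ᵥ v) a) :
    ∃ U ∈ unimodularFixing s, 0 < (U *ᵥ v) a ∧ (∀ i ∈ s, i ≠ a → (U *ᵥ v) i = 0) ∧
      ∀ i ≠ a, 0 ≤ (U *ᵥ v) i ∧ (U *ᵥ v) i < (U *ᵥ v) a := by
  obtain ⟨U, ⟨hU, hUpos⟩, hmin⟩ := exists_minimalFor_of_wellFoundedLT
    (fun U => U ∈ unimodularFixing s ∧ 0 < (U *ᵥ v) a) (fun U => ((U *ᵥ v) a).toNat) hpos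
  set w := U *ᵥ v
  let V := rowShear a (Function.update (fun i => -(w i / w a)) a 0) * U
  have hV : V ∈ unimodularFixing s :=
    mul_mem (rowShear_mem_unimodularFixing ha (by simp)) hU
  have hVa : (V *ᵥ v) a = w a := by
    rw [← mulVec_mulVec, rowShear_mulVec, Function.update_self, zero_mul, add_zero]
  have hVi {i} (hi : i ≠ a) : (V *ᵥ v) i = w i % w a := by
    rw [← mulVec_mulVec, rowShear_mulVec, Function.update_of_ne hi, Int.emod_def]
    ring
  have hred {i} (hi : i ≠ a) : 0 ≤ (V *ᵥ v) i ∧ (V *ᵥ v) i < w a :=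
    hVi hi ▸ ⟨Int.emod_nonneg _ hUpos.ne', Int.emod_lt_of_pos _ hUpos⟩
  refine ⟨V, hV, hVa ▸ hUpos, fun i hi hia => ?_, fun i hi => hVa ▸ hred hi⟩
  by_contra hne
  let W := rowShear i (Pi.single a (-1)) * V
  have hW : W ∈ unimodularFixing s :=
    mul_mem (rowShear_mem_unimodularFixing hi (by simp [hia])) hV
  have hWa : (W *ᵥ v) a = w a - (V *ᵥ v) i := by
    rw [← mulVec_mulVec, rowShear_mulVec, hVa, Pi.single_eq_same]
    ring
  have hlt := hred hia
  have hWle : (W *ᵥ v) a ≤ w a := by omega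
  have hle : (w a).toNat ≤ ((W *ᵥ v) a).toNat := hmin ⟨hW, by omega⟩ (Int.toNat_le_toNat hWle)
  omega

end UnimodularFixing

variable {n m r : ℕ}

lemma isHNF_of_submatrix_castSucc_of_last_eq_zero (hr : r ≤ n) {j : Fin r → Fin m}
    {M : Matrix (Fin n) (Fin (m + 1)) ℤ} (h : IsHNFWith (M.submatrix id Fin.castSucc) r hr j)
    (hlast : ∀ i : Fin n, r ≤ i → M i (Fin.last m) = 0) : IsHNF M := by
  obtain ⟨hmono, hzero, hpivot, hleft, hreduced⟩ := h
  refine ⟨r, hr, Fin.castSucc ∘ j, (Fin.strictMono_castSucc).comp hmono, fun i hi l => ?_,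
    hpivot, fun i l hl => ?_, hreduced⟩
  · cases l using Fin.lastCases with
    | last => exact hlast i hi
    | cast l => exact hzero i hi l
  · cases l using Fin.lastCases with
    | last => exact absurd hl (Fin.le_last _).not_gt
    | cast l => exact hleft i l hl

lemma isHNF_of_submatrix_castSucc_of_last_pos (hr : r < n) {j : Fin r → Fin m}
    {M : Matrix (Fin n) (Fin (m + 1)) ℤ} (h : IsHNFWith (M.submatrix id Fin.castSucc) r hr.le j)
    (hpos : 0 < M ⟨r, hr⟩ (Fin.last m)) (hlast : ∀ i : Fin n, r < i → M i (Fin.last m) = 0)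
    (hred : ∀ i : Fin n, (i : ℕ) < r → 0 ≤ M i (Fin.last m) ∧
      M i (Fin.last m) < M ⟨r, hr⟩ (Fin.last m)) : IsHNF M := by
  obtain ⟨hmono, hzero, hpivot, hleft, hreduced⟩ := h
  let j' : Fin (r + 1) → Fin (m + 1) := Fin.snoc (α := fun _ => _) (Fin.castSucc ∘ j) (Fin.last m)
  have hj_last : j' (Fin.last r) = Fin.last m := Fin.snoc_last _ _
  have hj_cast (i : Fin r) : j' i.castSucc = (j i).castSucc := Fin.snoc_castSucc ..
  refine ⟨r + 1, hr, j', fun a b hab => ?_, fun i hi l => ?_, fun i => ?_, fun i l hl => ?_,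
    fun i k hk => ?_⟩
  · cases b using Fin.lastCases with
    | last =>
      obtain ⟨a, rfl⟩ := Fin.exists_castSucc_eq.mpr hab.ne
      rw [hj_cast, hj_last]
      exact Fin.castSucc_lt_last _
    | cast b =>
      obtain ⟨a, rfl⟩ := Fin.exists_castSucc_eq.mpr (hab.trans (Fin.castSucc_lt_last b)).ne
      rw [hj_cast, hj_cast]
      exact hmono hab
  · cases l using Fin.lastCases with
    | last => exact hlast i hi
    | cast l => exact hzero i (Nat.le_of_succ_le hi) l
  · cases i using Fin.lastCases with
    | last => rwa [hj_last]
    | cast i => rw [hj_cast]; exact hpivot i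
  · cases l using Fin.lastCases with
    | last => exact absurd hl (Fin.le_last _).not_gt
    | cast l =>
      cases i using Fin.lastCases with
      | last => exact hzero ⟨r, hr⟩ le_rfl l
      | cast i => rw [hj_cast] at hl; exact hleft i l hl
  · cases i using Fin.lastCases with
    | last => rw [hj_last]; exact hred k hk
    | cast i => rw [hj_cast]; exact hreduced i k hk

lemma exists_isUnit_det_isHNF_mul_of_submatrix_castSucc (hr : r ≤ n) {j : Fin r → Fin m}
    {A : Matrix (Fin n) (Fin (m + 1)) ℤ} (h : IsHNFWith (A.submatrix id Fin.castSucc) r hr j) :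
    ∃ U : Matrix (Fin n) (Fin n) ℤ, IsUnit U.det ∧ IsHNF (U * A) := by
  let s : Set (Fin n) := {i | r ≤ i}
  by_cases hpos : ∃ hrn : r < n, ∃ U ∈ unimodularFixing s, 0 < (U *ᵥ A.col (Fin.last m)) ⟨r, hrn⟩
  · obtain ⟨hrn, hpos⟩ := hpos
    obtain ⟨U, hU, hUpos, hzero, hred⟩ :=
      exists_unimodularFixing_mulVec_reduced (s := s) (a := ⟨r, hrn⟩) (le_refl r) hpos
    have hfix : (U * A).submatrix id Fin.castSucc = A.submatrix id Fin.castSucc := by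
      ext i l
      exact congrFun (hU.2 (A.col l.castSucc) fun i hi => h.2.1 i hi l) i
    exact ⟨U, hU.1, isHNF_of_submatrix_castSucc_of_last_pos hrn (hfix ▸ h) hUpos
      (fun i hi => hzero i hi.le (Fin.ne_of_val_ne hi.ne'))
      fun i hi => hred i (Fin.ne_of_val_ne hi.ne)⟩
  · push Not at hpos
    refine ⟨1, by rw [det_one]; exact isUnit_one, ?_⟩
    rw [Matrix.one_mul]
    exact isHNF_of_submatrix_castSucc_of_last_eq_zero hr h fun i hi =>
      eq_zero_of_forall_unimodularFixing_mulVec_nonpos (s := s) (le_refl r)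
        (hpos (hi.trans_lt i.2)) i hi

lemma exists_isUnit_det_isHNF_mul (A : Matrix (Fin n) (Fin m) ℤ) :
    ∃ U : Matrix (Fin n) (Fin n) ℤ, IsUnit U.det ∧ IsHNF (U * A) := by
  induction m with
  | zero =>
    exact ⟨1, by simp, 0, Nat.zero_le _, Fin.elim0, fun a => a.elim0, fun _ _ l => l.elim0,
      fun a => a.elim0, fun a => a.elim0, fun a => a.elim0⟩
  | succ m ih =>
    obtain ⟨U, hU, r, hr, j, hj⟩ := ih (A.submatrix id Fin.castSucc)
    obtain ⟨V, hV, hVH⟩ := exists_isUnit_det_isHNF_mul_of_submatrix_castSucc (A := U * A) hr hj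
    exact ⟨V * U, by rw [det_mul]; exact hV.mul hU, by rwa [Matrix.mul_assoc]⟩

lemma exists_isHNFOf (A : Matrix (Fin n) (Fin m) ℤ) : ∃ H, IsHNFOf H A := by
  obtain ⟨U, hU, hH⟩ := exists_isUnit_det_isHNF_mul A
  exact ⟨U * A, hH, U⁻¹, Int.isUnit_iff.mp (isUnit_nonsing_inv_det U hU),
    (nonsing_inv_mul_cancel_left _ A hU).symm⟩

end HermiteExistence

/-! ### Hermite normal forms with a prescribed diagonal prefix -/

section DiagonalPrefix

open Finset Matrix

section UpperTrapezoidal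

variable {n m k : ℕ} {R : Type*}

/-- Rectangular upper triangularity: entries below the main diagonal vanish. -/
def IsUpperTrapezoidal [Zero R] (Q : Matrix (Fin n) (Fin k) R) : Prop :=
  ∀ ⦃i : Fin n⦄ ⦃j : Fin k⦄, (j : ℕ) < i → Q i j = 0

lemma IsUpperTrapezoidal.isUpperTriangular_top [Zero R] {Q : Matrix (Fin n) (Fin k) R}
    (hQ : IsUpperTrapezoidal Q) (hkn : k ≤ n) :
    (Q.submatrix (Fin.castLE hkn) id).IsUpperTriangular := fun _ _ hij => hQ hij

lemma IsUpperTrapezoidal.submatrix_castLE [Zero R] {H : Matrix (Fin n) (Fin m) R}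
    (hH : IsUpperTrapezoidal H) (hkm : k ≤ m) :
    IsUpperTrapezoidal (H.submatrix id (Fin.castLE hkm)) := fun _ _ hij => hH hij

lemma IsUpperTrapezoidal.mul_eq_submatrix_mul_top [NonUnitalNonAssocSemiring R] {ι : Type*}
    {Q : Matrix (Fin n) (Fin k) R} (hQ : IsUpperTrapezoidal Q) (hkn : k ≤ n)
    (V : Matrix ι (Fin n) R) :
    V * Q = V.submatrix id (Fin.castLE hkn) * Q.submatrix (Fin.castLE hkn) id := by
  ext i j
  simp only [mul_apply]
  refine (Fintype.sum_of_injective _ (Fin.castLE_injective hkn) _ _ (fun b hb => ?_)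
    fun _ => rfl).symm
  have hbk : k ≤ b := not_lt.mp fun hlt => hb ⟨⟨b, hlt⟩, rfl⟩
  rw [hQ (j.2.trans_le hbk), mul_zero]

lemma mul_apply_of_isUpperTriangular [NonUnitalNonAssocSemiring R] {ι : Type*}
    {Q : Matrix ι (Fin k) R} {H : Matrix (Fin k) (Fin k) R} (hH : H.IsUpperTriangular) {i : ι}
    {j : Fin k} (hQ : ∀ b < j, Q i b = 0) : (Q * H) i j = Q i j * H j j := by
  rw [mul_apply]
  refine sum_eq_single_of_mem j (mem_univ j) fun b _ hb => ?_
  rcases lt_or_gt_of_ne hb with hbj | hbj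
  · rw [hQ b hbj, zero_mul]
  · rw [hH hbj, mul_zero]

lemma isUpperTrapezoidal_of_mul [NonUnitalNonAssocSemiring R] [NoZeroDivisors R]
    {Q : Matrix (Fin n) (Fin k) R} {H : Matrix (Fin k) (Fin k) R} (hH : H.IsUpperTriangular)
    (hdiag : ∀ j, H j j ≠ 0) (h : IsUpperTrapezoidal (Q * H)) : IsUpperTrapezoidal Q := by
  intro i j hji
  induction j using WellFoundedLT.induction with
  | _ j ih =>
    have hmul := mul_apply_of_isUpperTriangular hH fun b hb =>
      ih b hb ((Fin.lt_def.mp hb).trans hji)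
    exact (mul_eq_zero.mp (hmul ▸ h hji)).resolve_right (hdiag j)

end UpperTrapezoidal

section HNFShape

variable {n m : ℕ} {H : Matrix (Fin n) (Fin m) ℤ}

lemma le_apply_of_strictMono {r : ℕ} {j : Fin r → Fin m} (hj : StrictMono j) (i : Fin r) :
    (i : ℕ) ≤ j i := by
  obtain ⟨a, ha⟩ := i
  induction a with
  | zero => exact Nat.zero_le _
  | succ a ih =>
    exact Nat.succ_le_of_lt ((ih (by omega)).trans_lt (hj (Fin.mk_lt_mk.mpr (Nat.lt_succ_self a))))

lemma IsHNF.isUpperTrapezoidal (h : IsHNF H) : IsUpperTrapezoidal H := by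
  obtain ⟨r, hr, j, hmono, hzero, -, hleft, -⟩ := h
  intro i l hl
  by_cases hi : (i : ℕ) < r
  · exact hleft ⟨i, hi⟩ l (hl.trans_le (le_apply_of_strictMono hmono ⟨i, hi⟩))
  · exact hzero i (not_lt.mp hi) l

lemma IsHNF.diag_eq_zero_or_reduced (h : IsHNF H) {i : Fin n} {l : Fin m} (hil : (i : ℕ) = l) :
    H i l = 0 ∨ 0 < H i l ∧ ∀ a < i, 0 ≤ H a l ∧ H a l < H i l := by
  obtain ⟨r, hr, j, hmono, hzero, hpivot, hleft, hreduced⟩ := h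
  by_cases hi : (i : ℕ) < r
  · rcases (le_apply_of_strictMono hmono ⟨i, hi⟩).eq_or_lt with hj | hj
    · obtain rfl : l = j ⟨i, hi⟩ := Fin.ext (hil.symm.trans hj)
      exact .inr ⟨hpivot ⟨i, hi⟩, hreduced ⟨i, hi⟩⟩
    · exact .inl (hleft ⟨i, hi⟩ l (hil ▸ hj))
  · exact .inl (hzero i (not_lt.mp hi) l)

end HNFShape

section LeftInverse

variable {n k : ℕ}

lemma map_intCast_mul {ι κ μ : Type*} [Fintype κ] (p : ℕ) (M : Matrix ι κ ℤ)
    (N : Matrix κ μ ℤ) :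
    (M * N).map (Int.cast : ℤ → ZMod p) =
      M.map (Int.cast : ℤ → ZMod p) * N.map (Int.cast : ℤ → ZMod p) :=
  Matrix.map_mul (f := Int.castRingHom (ZMod p))

lemma isColPrimitive_of_mul {ι κ μ : Type*} [Fintype κ] [Finite μ] {M : Matrix ι κ ℤ}
    {N : Matrix κ μ ℤ} (h : IsColPrimitive (M * N)) : IsColPrimitive N := by
  have := Fintype.ofFinite μ
  intro p hp
  have hMN := mulVec_injective_iff.mpr (h p hp)
  rw [map_intCast_mul] at hMN
  refine mulVec_injective_iff.mp fun x y hxy => hMN ?_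
  simp only [← mulVec_mulVec, hxy]

lemma isColPrimitive_of_leftInverse {ι κ : Type*} [Fintype ι] [Finite κ] [DecidableEq κ]
    {P : Matrix ι κ ℤ} {L : Matrix κ ι ℤ} (h : L * P = 1) : IsColPrimitive P := by
  have := Fintype.ofFinite κ
  refine isColPrimitive_of_mul (M := L) fun p hp => ?_
  have : Fact p.Prime := ⟨hp⟩
  rw [h, ColIndepMod, Matrix.map_one _ Int.cast_zero Int.cast_one]
  exact linearIndependent_cols_iff_isUnit.mpr isUnit_one

lemma IsColPrimitive.isUnit_det {κ : Type*} [Fintype κ] [DecidableEq κ] {P : Matrix κ κ ℤ}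
    (hP : IsColPrimitive P) : IsUnit P.det := by
  by_contra h
  rw [Int.isUnit_iff_natAbs_eq] at h
  obtain ⟨p, hp, hdvd⟩ := Nat.exists_prime_and_dvd h
  have : Fact p.Prime := ⟨hp⟩
  have hunit := (isUnit_iff_isUnit_det _).mp (linearIndependent_cols_iff_isUnit.mp (hP p hp))
  have hcast : (P.map (Int.cast : ℤ → ZMod p)).det = (P.det : ZMod p) :=
    (Int.cast_det P).symm
  rw [hcast, (ZMod.intCast_zmod_eq_zero_iff_dvd _ _).mpr (Int.natCast_dvd.mpr hdvd)] at hunit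
  exact not_isUnit_zero hunit

lemma IsUpperTrapezoidal.isUnit_det_top {Q : Matrix (Fin n) (Fin k) ℤ}
    (hQ : IsUpperTrapezoidal Q) (hprim : IsColPrimitive Q) (hkn : k ≤ n) :
    IsUnit (Q.submatrix (Fin.castLE hkn) id).det := by
  rw [← Matrix.one_mul Q, hQ.mul_eq_submatrix_mul_top hkn] at hprim
  exact (isColPrimitive_of_mul hprim).isUnit_det

lemma IsColPrimitive.exists_leftInverse {P : Matrix (Fin n) (Fin k) ℤ}
    (hP : IsColPrimitive P) (hkn : k ≤ n) : ∃ L : Matrix (Fin k) (Fin n) ℤ, L * P = 1 := by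
  obtain ⟨H, hH, V, hV, rfl⟩ := exists_isHNFOf P
  have hT := hH.isUpperTrapezoidal.isUnit_det_top (isColPrimitive_of_mul hP) hkn
  set T := H.submatrix (Fin.castLE hkn) id
  have htop : V⁻¹.submatrix (Fin.castLE hkn) id * (V * H) = T :=
    congrArg (·.submatrix (Fin.castLE hkn) id)
      (nonsing_inv_mul_cancel_left V H (Int.isUnit_iff.mpr hV))
  exact ⟨T⁻¹ * V⁻¹.submatrix (Fin.castLE hkn) id, by
    rw [Matrix.mul_assoc, htop, nonsing_inv_mul T hT]⟩

end LeftInverse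

section Reduced

variable {n m k : ℕ} {d : Fin k → ℕ} {H H' : Matrix (Fin k) (Fin k) ℤ}

/-- Upper triangularity with diagonal `d` and the entries above each diagonal entry reduced modulo
it; for positive `d`, these are the nonsingular square Hermite normal forms. -/
structure IsReducedWithDiag (d : Fin k → ℕ) (H : Matrix (Fin k) (Fin k) ℤ) : Prop where
  isUpperTriangular : H.IsUpperTriangular
  diag_eq : ∀ a, H a a = d a
  mem_Ico : ∀ ⦃a b⦄, a < b → H a b ∈ Set.Ico 0 (d b : ℤ)

lemma IsReducedWithDiag.diag_ne_zero (hH : IsReducedWithDiag d H) (hd : ∀ i, 0 < d i)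
    (a : Fin k) : H a a ≠ 0 := by
  rw [hH.diag_eq]
  exact_mod_cast (hd a).ne'

lemma IsReducedWithDiag.det_eq (hH : IsReducedWithDiag d H) : H.det = ∏ a, (d a : ℤ) := by
  rw [det_of_isUpperTriangular hH.isUpperTriangular]
  exact prod_congr rfl fun a _ => hH.diag_eq a

lemma unitriangular_mul_apply {R : Type*} [NonAssocSemiring R] {N H : Matrix (Fin k) (Fin k) R}
    (hN : N.IsUpperTriangular) (hdiag : ∀ a, N a a = 1) (hH : H.IsUpperTriangular) {a b : Fin k}
    (hab : a < b) (hbetween : ∀ c, a < c → c < b → N a c = 0) :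
    (N * H) a b = H a b + N a b * H b b := by
  rw [mul_apply, sum_eq_add_of_mem a b (mem_univ a) (mem_univ b) hab.ne, hdiag, one_mul]
  rintro c - ⟨hca, hcb⟩
  rcases lt_or_gt_of_ne hca with hac | hac
  · rw [hN hac, zero_mul]
  · rcases lt_or_gt_of_ne hcb with hbc | hbc
    · rw [hbetween c hac hbc, zero_mul]
    · rw [hH hbc, mul_zero]

lemma IsReducedWithDiag.eq_of_mul_eq (hH : IsReducedWithDiag d H) (hH' : IsReducedWithDiag d H')
    (hd : ∀ i, 0 < d i) {N : Matrix (Fin k) (Fin k) ℤ} (h : N * H' = H) : H' = H := by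
  have hN : N.IsUpperTriangular := isUpperTrapezoidal_of_mul hH'.isUpperTriangular
    (hH'.diag_ne_zero hd) (h ▸ hH.isUpperTriangular)
  have hdiag (a : Fin k) : N a a = 1 := by
    have hmul := mul_apply_of_isUpperTriangular hH'.isUpperTriangular fun _ hb => hN hb (i := a)
    refine mul_right_cancel₀ (hH'.diag_ne_zero hd a) (Eq.trans hmul.symm ?_)
    rw [one_mul, h]
    exact (hH.diag_eq a).trans (hH'.diag_eq a).symm
  have hoff {a b : Fin k} (hab : a < b) : N a b = 0 := by
    induction b using WellFoundedLT.induction with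
    | _ b ih =>
      have hmul := unitriangular_mul_apply hN hdiag hH'.isUpperTriangular hab
        fun c hac hcb => ih c hcb hac
      rw [h, hH'.diag_eq] at hmul
      obtain ⟨hlo, hhi⟩ := hH.mem_Ico hab
      obtain ⟨hlo', hhi'⟩ := hH'.mem_Ico hab
      rcases lt_trichotomy (N a b) 0 with hneg | hzero | hpos
      · nlinarith
      · exact hzero
      · nlinarith
  have hone : N = 1 := by
    ext a b
    rcases lt_trichotomy a b with hab | rfl | hab
    · rw [hoff hab, one_apply_ne hab.ne]
    · rw [hdiag, one_apply_eq]
    · rw [hN hab, one_apply_ne hab.ne']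
  rwa [hone, Matrix.one_mul] at h

lemma IsReducedWithDiag.eq_of_isColPrimitive_mul_eq (hH : IsReducedWithDiag d H)
    (hH' : IsReducedWithDiag d H') (hd : ∀ i, 0 < d i) (hkn : k ≤ n)
    {P P' : Matrix (Fin n) (Fin k) ℤ} (hP : IsColPrimitive P) (h : P * H = P' * H') : H' = H := by
  obtain ⟨L, hL⟩ := hP.exists_leftInverse hkn
  refine hH.eq_of_mul_eq hH' hd (N := L * P') ?_
  rw [Matrix.mul_assoc, ← h, ← Matrix.mul_assoc, hL, Matrix.one_mul]

/-- The finite set of reduced matrices with diagonal `d`, as a product of intervals. -/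
noncomputable def reducedMatrices (d : Fin k → ℕ) : Finset (Matrix (Fin k) (Fin k) ℤ) :=
  (Fintype.piFinset fun a => Fintype.piFinset fun b =>
    if a < b then Ico 0 (d b : ℤ) else if a = b then {(d b : ℤ)} else {0}).map of.toEmbedding

lemma mem_reducedMatrices : H ∈ reducedMatrices d ↔ IsReducedWithDiag d H := by
  simp only [reducedMatrices, mem_map_equiv, Fintype.mem_piFinset, of_symm_apply]
  constructor
  · intro h
    refine ⟨fun a b (hba : b < a) => ?_, fun a => ?_, fun a b hab => ?_⟩
    · simpa [hba.not_gt, hba.ne'] using h a b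
    · simpa using h a a
    · simpa [hab] using h a b
  · rintro hH a b
    rcases lt_trichotomy a b with hab | rfl | hba
    · simpa [hab] using hH.mem_Ico hab
    · simpa using hH.diag_eq a
    · simpa [hba.not_gt, hba.ne'] using hH.isUpperTriangular hba

lemma card_reducedMatrices (d : Fin k → ℕ) : #(reducedMatrices d) = ∏ b, d b ^ (b : ℕ) := by
  have hcard (a b : Fin k) : #(if a < b then Ico 0 (d b : ℤ) else if a = b then {(d b : ℤ)}
      else {0}) = if a < b then d b else 1 := by split_ifs <;> simp
  simp only [reducedMatrices, card_map, Fintype.card_piFinset, hcard]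
  rw [Finset.prod_comm]
  refine prod_congr rfl fun b _ => ?_
  rw [prod_ite, prod_const, prod_const_one, mul_one, filter_gt_eq_Iio, Fin.card_Iio]

variable {A : Matrix (Fin n) (Fin m) ℤ}

lemma exists_reduced_of_isHNFOf (hd : ∀ i, 0 < d i) (hkn : k ≤ n) (hkm : k ≤ m)
    {H : Matrix (Fin n) (Fin m) ℤ} (hHA : IsHNFOf H A)
    (hdiag : ∀ i, H (Fin.castLE hkn i) (Fin.castLE hkm i) = d i) :
    ∃ H₀ P, IsReducedWithDiag d H₀ ∧ IsColPrimitive P ∧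
      P * H₀ = A.submatrix id (Fin.castLE hkm) := by
  obtain ⟨hH, V, hV, rfl⟩ := hHA
  have htri := hH.isUpperTrapezoidal.submatrix_castLE hkm
  refine ⟨H.submatrix (Fin.castLE hkn) (Fin.castLE hkm), V.submatrix id (Fin.castLE hkn),
    ⟨htri.isUpperTriangular_top hkn, hdiag, fun a b hab => ?_⟩,
    isColPrimitive_of_leftInverse (L := V⁻¹.submatrix (Fin.castLE hkn) id) ?_,
    (htri.mul_eq_submatrix_mul_top hkn V).symm⟩
  · have hne : H (Fin.castLE hkn b) (Fin.castLE hkm b) ≠ 0 := by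
      rw [hdiag]
      exact_mod_cast (hd b).ne'
    rw [← hdiag]
    exact ((hH.diag_eq_zero_or_reduced rfl).resolve_left hne).2 (Fin.castLE hkn a) hab
  · have hVV := congrArg (·.submatrix (Fin.castLE hkn) (Fin.castLE hkn))
      (nonsing_inv_mul V (Int.isUnit_iff.mpr hV))
    exact hVV.trans (submatrix_one _ (Fin.castLE_injective hkn))

lemma diag_eq_of_isHNFOf (hd : ∀ i, 0 < d i) (hkn : k ≤ n) (hkm : k ≤ m)
    {H : Matrix (Fin n) (Fin m) ℤ} (hHA : IsHNFOf H A) {H₀ : Matrix (Fin k) (Fin k) ℤ}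
    (hH₀ : IsReducedWithDiag d H₀) {P : Matrix (Fin n) (Fin k) ℤ} (hP : IsColPrimitive P)
    (hPA : P * H₀ = A.submatrix id (Fin.castLE hkm)) (i : Fin k) :
    H (Fin.castLE hkn i) (Fin.castLE hkm i) = d i := by
  obtain ⟨hH, V, hV, rfl⟩ := hHA
  have hVdet : IsUnit V.det := Int.isUnit_iff.mpr hV
  have hmul : V⁻¹ * P * H₀ = H.submatrix id (Fin.castLE hkm) := by
    rw [Matrix.mul_assoc, hPA]
    exact congrArg (·.submatrix id (Fin.castLE hkm)) (nonsing_inv_mul_cancel_left V H hVdet)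
  have hprim : IsColPrimitive (V⁻¹ * P) :=
    isColPrimitive_of_mul (M := V) (by rwa [mul_nonsing_inv_cancel_left V P hVdet])
  have htri : IsUpperTrapezoidal (V⁻¹ * P) := isUpperTrapezoidal_of_mul hH₀.isUpperTriangular
    (hH₀.diag_ne_zero hd) (hmul ▸ hH.isUpperTrapezoidal.submatrix_castLE hkm)
  have hunit : IsUnit ((V⁻¹ * P) (Fin.castLE hkn i) i) := by
    have hdet := htri.isUnit_det_top hprim hkn
    rw [det_of_isUpperTriangular (htri.isUpperTriangular_top hkn)] at hdet
    exact IsUnit.prod_univ_iff.mp hdet i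
  have hdiag := mul_apply_of_isUpperTriangular hH₀.isUpperTriangular fun b (hb : b < i) =>
    htri (i := Fin.castLE hkn i) hb
  rw [hmul, hH₀.diag_eq, submatrix_apply, id] at hdiag
  have hnonneg : 0 ≤ H (Fin.castLE hkn i) (Fin.castLE hkm i) :=
    (hH.diag_eq_zero_or_reduced rfl).elim ge_of_eq fun h => h.1.le
  rcases Int.isUnit_iff.mp hunit with hone | hneg
  · rwa [hone, one_mul] at hdiag
  · rw [hneg] at hdiag
    have hdi := hd i
    omega

theorem exists_isHNFOf_diag_iff (hd : ∀ i, 0 < d i) (hkn : k ≤ n) (hkm : k ≤ m) :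
    (∃ H, IsHNFOf H A ∧ ∀ i, H (Fin.castLE hkn i) (Fin.castLE hkm i) = d i) ↔
      ∃ H₀ P, IsReducedWithDiag d H₀ ∧ IsColPrimitive P ∧
        P * H₀ = A.submatrix id (Fin.castLE hkm) := by
  constructor
  · rintro ⟨H, hHA, hdiag⟩
    exact exists_reduced_of_isHNFOf hd hkn hkm hHA hdiag
  · rintro ⟨H₀, P, hH₀, hP, hPA⟩
    obtain ⟨H, hHA⟩ := exists_isHNFOf A
    exact ⟨H, hHA, diag_eq_of_isHNFOf hd hkn hkm hHA hH₀ hP hPA⟩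

end Reduced

end DiagonalPrefix

/-! ### Natural density of matrices -/

section MatrixDensity

open Finset Matrix

variable {n m k : ℕ}

lemma matCubeCount_eq_cubeCount (S : Set (Matrix (Fin n) (Fin m) ℤ))
    (z : Matrix (Fin n) (Fin m) ℤ) (B : ℕ) :
    matCubeCount S z B = cubeCount (unvec ⁻¹' S) z.vec B := by
  classical
  rw [matCubeCount, cubeCount]
  refine card_bij' (fun A _ => (of A).vec) (fun f _ => unvec f) (fun A hA => ?_) (fun f hf => ?_)
    (fun _ _ => rfl) fun _ _ => rfl
  · rw [mem_filter, Fintype.mem_piFinset] at hA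
    exact mem_filter.mpr
      ⟨mem_cube.mpr fun x => mem_window.mpr (mem_Ico.mp (Fintype.mem_piFinset.mp (hA.1 x.2) x.1)),
        hA.2⟩
  · obtain ⟨hfz, hfS⟩ := mem_filter.mp hf
    refine mem_filter.mpr ⟨Fintype.mem_piFinset.mpr fun i => Fintype.mem_piFinset.mpr fun l => ?_,
      hfS⟩
    exact mem_Ico.mpr (mem_window.mp (mem_cube.mp hfz (l, i)))

lemma hasMatDensity_of_hasCubeDensity {S : Set (Matrix (Fin n) (Fin m) ℤ)} {δ : ℝ}
    (h : HasCubeDensity (unvec ⁻¹' S) δ) : HasMatDensity S δ := by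
  intro z
  have hz := h z.vec
  simp only [Fintype.card_prod, Fintype.card_fin, mul_comm m n] at hz
  simpa only [matCubeCount_eq_cubeCount] using hz

lemma hasMatDensity_submatrix_castLE_mem (hkm : k ≤ m) {S : Set (Matrix (Fin n) (Fin k) ℤ)}
    {δ : ℝ} (h : HasCubeDensity (unvec ⁻¹' S) δ) :
    HasMatDensity {A : Matrix (Fin n) (Fin m) ℤ | A.submatrix id (Fin.castLE hkm) ∈ S} δ :=
  hasMatDensity_of_hasCubeDensity
    (h.comap (e := Prod.map (Fin.castLE hkm) id)
      ((Fin.castLE_injective hkm).prodMap Function.injective_id))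

lemma setOf_exists_isHNFOf_diag_eq (hkn : k ≤ n) (hkm : k ≤ m) {d : Fin k → ℕ}
    (hd : ∀ i, 0 < d i) :
    {A : Matrix (Fin n) (Fin m) ℤ | ∃ H, IsHNFOf H A ∧
      ∀ i : Fin k, H (Fin.castLE hkn i) (Fin.castLE hkm i) = (d i : ℤ)} =
    {A | A.submatrix id (Fin.castLE hkm) ∈
      ⋃ H ∈ reducedMatrices d, (· * H) '' {P | IsColPrimitive P}} := by
  ext A
  simp only [Set.mem_ofPred_eq, exists_isHNFOf_diag_iff hd, Set.mem_iUnion₂, Set.mem_image,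
    mem_reducedMatrices, exists_prop, exists_and_left]

lemma pairwiseDisjoint_isColPrimitive_mul (hkn : k ≤ n) {d : Fin k → ℕ} (hd : ∀ i, 0 < d i) :
    (reducedMatrices d : Set (Matrix (Fin k) (Fin k) ℤ)).PairwiseDisjoint
      fun H => (· * H) '' {P : Matrix (Fin n) (Fin k) ℤ | IsColPrimitive P} := by
  intro H hH H' hH' hne
  refine Set.disjoint_left.mpr ?_
  rintro _ ⟨P, hP, rfl⟩ ⟨P', -, hPP'⟩
  exact hne ((mem_reducedMatrices.mp hH).eq_of_isColPrimitive_mul_eq (mem_reducedMatrices.mp hH')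
    hd hkn hP hPP'.symm).symm

theorem hasCubeDensity_iUnion_reducedMatrices (hk : k < n) {d : Fin k → ℕ} (hd : ∀ i, 0 < d i) :
    HasCubeDensity (unvec ⁻¹' ⋃ H ∈ reducedMatrices d,
        (· * H) '' {P : Matrix (Fin n) (Fin k) ℤ | IsColPrimitive P})
      (∏ i : Fin k, zetaR (n - i) * (d i : ℝ) ^ (n - (i : ℕ)))⁻¹ := by
  have hdensity (H) (hH : H ∈ reducedMatrices d) :
      HasCubeDensity (unvec ⁻¹' ((· * H) '' {P : Matrix (Fin n) (Fin k) ℤ | IsColPrimitive P}))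
        (∏ i : Fin k, (zetaR (n - i))⁻¹ / (d i : ℝ) ^ n) := by
    have hdet : H.det = (∏ i, d i : ℕ) := by
      rw [(mem_reducedMatrices.mp hH).det_eq, Nat.cast_prod]
    have hne : H.det ≠ 0 := by
      rw [hdet]
      exact_mod_cast prod_ne_zero_iff.mpr fun i _ => (hd i).ne'
    have h := hasCubeDensity_isColPrimitive_mul (m := Fin n) (by rwa [Fintype.card_fin]) hne
    rwa [hdet, Int.natAbs_natCast, Nat.cast_prod, ← prod_pow, ← prod_div_distrib,
      Fintype.card_fin] at h
  have hunion := HasCubeDensity.biUnion (reducedMatrices d)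
    (fun H hH H' hH' hne => (pairwiseDisjoint_isColPrimitive_mul hk.le hd hH hH' hne).preimage _)
    hdensity
  have hvalue : ∑ _H ∈ reducedMatrices d, ∏ i : Fin k, (zetaR (n - i))⁻¹ / (d i : ℝ) ^ n =
      (∏ i : Fin k, zetaR (n - i) * (d i : ℝ) ^ (n - (i : ℕ)))⁻¹ := by
    rw [sum_const, card_reducedMatrices, nsmul_eq_mul, Nat.cast_prod, ← prod_mul_distrib,
      ← prod_inv_distrib]
    refine prod_congr rfl fun i _ => ?_
    have hdi : (d i : ℝ) ≠ 0 := by exact_mod_cast (hd i).ne'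
    rw [pow_sub₀ _ hdi (i.2.trans hk).le, Nat.cast_pow, mul_inv, mul_inv, inv_inv]
    ring
  simpa only [hvalue, Set.preimage_iUnion₂] using hunion

end MatrixDensity

/-- Density of `n × m` integer matrices whose HNF diagonal begins with
`(d_1, …, d_k)`, all positive. -/
theorem density_hnf_diag_prefix (n m k : ℕ) (hn : 2 ≤ n)
    (hcond : if m < n then k ≤ m else k < n) (hkn : k ≤ n) (hkm : k ≤ m)
    (d : Fin k → ℕ) (hd : ∀ i, 0 < d i) :
    HasMatDensity
      {A : Matrix (Fin n) (Fin m) ℤ | ∃ H, IsHNFOf H A ∧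
        ∀ i : Fin k, H (Fin.castLE hkn i) (Fin.castLE hkm i) = (d i : ℤ)}
      (∏ i : Fin k, zetaR (n - (i : ℕ)) * (d i : ℝ) ^ (n - (i : ℕ)))⁻¹ := by
  have hk : k < n := by split_ifs at hcond <;> omega
  rw [setOf_exists_isHNFOf_diag_eq hkn hkm hd]
  exact hasMatDensity_submatrix_castLE_mem hkm (hasCubeDensity_iUnion_reducedMatrices hk hd)
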